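/- arXiv:1506.03628 — 2 statements merged into one kernel-verified Lean document; each statement's English description precedes it below -/
import Mathlib

section
/- Let N ≥ 2 be an integer, ω > 0, and 1 < p < p_max, and let U : [0,∞) → (0,∞) be the radial profile of a ground-state profile u of (QLS) (so u(x) = U(|x|)). Suppose v : [0,∞) → ℝ is continuous, twice continuously differentiable on (0,∞), satisfies ∫₀^∞ (v(r)² + v'(r)²) r^{N−1} dr < ∞, and solves L₊,₀ v = 0 on (0,∞) (the radial linearized equation with angular eigenvalue λ₀ = 0). Then v is identically zero. -/
open MeasureTheory Real Filter Topology

noncomputable section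

/-- Partial derivative along the `i`-th coordinate direction. -/
def pd {N : ℕ} {F : Type*} [NormedAddCommGroup F] [NormedSpace ℝ F]
    (i : Fin N) (f : EuclideanSpace ℝ (Fin N) → F) (x : EuclideanSpace ℝ (Fin N)) : F :=
  fderiv ℝ f x (EuclideanSpace.single i 1)

/-- Euclidean Laplacian. -/
def lap {N : ℕ} {F : Type*} [NormedAddCommGroup F] [NormedSpace ℝ F]
    (f : EuclideanSpace ℝ (Fin N) → F) (x : EuclideanSpace ℝ (Fin N)) : F :=
  ∑ i : Fin N, pd i (pd i f) x

/-- Squared norm of the gradient of a real-valued function: `|∇f|²`. -/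
def gradsq {N : ℕ} (f : EuclideanSpace ℝ (Fin N) → ℝ) (x : EuclideanSpace ℝ (Fin N)) : ℝ :=
  ∑ i : Fin N, (pd i f x) ^ 2

/-- A ground-state profile of the quasilinear Schrödinger equation (QLS)
`-Δu - uΔ(u²) + ωu - u^p = 0` on `ℝ^N`: smooth, positive, radially symmetric with a
strictly decreasing positive profile, solves (QLS) pointwise, and decays
exponentially together with all its derivatives. -/
structure IsGroundState (N : ℕ) (ω p : ℝ) (u : EuclideanSpace ℝ (Fin N) → ℝ) : Prop where
  smooth : ContDiff ℝ (⊤ : ℕ∞) u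
  pos : ∀ x, 0 < u x
  radial : ∃ U : ℝ → ℝ, StrictAntiOn U (Set.Ici 0) ∧ (∀ r, 0 ≤ r → 0 < U r) ∧
      ∀ x, u x = U ‖x‖
  solves : ∀ x, -lap u x - u x * lap (fun y => (u y) ^ 2) x + ω * u x - (u x) ^ p = 0
  decay : ∀ k : ℕ, ∃ C > 0, ∃ δ > 0, ∀ x,
      ‖iteratedFDeriv ℝ k u x‖ ≤ C * Real.exp (-δ * ‖x‖)

/-- The linearized operator `L₊` around `u` (real-valued functions). -/
def Lplus {N : ℕ} (ω p : ℝ) (u η : EuclideanSpace ℝ (Fin N) → ℝ)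
    (x : EuclideanSpace ℝ (Fin N)) : ℝ :=
  -lap η x - 2 * u x * lap (fun y => u y * η y) x + ω * η x
    - (lap (fun y => (u y) ^ 2) x + p * u x ^ (p - 1)) * η x

/-- The linearized operator `L₋` around `u`. -/
def Lminus {N : ℕ} (ω p : ℝ) (u ζ : EuclideanSpace ℝ (Fin N) → ℝ)
    (x : EuclideanSpace ℝ (Fin N)) : ℝ :=
  -lap ζ x + ω * ζ x - (lap (fun y => (u y) ^ 2) x + u x ^ (p - 1)) * ζ x

/-- Radial Laplacian `Δ_r f (r) = f''(r) + ((N-1)/r) f'(r)`. -/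
def lapRad (N : ℕ) (f : ℝ → ℝ) (r : ℝ) : ℝ :=
  deriv (deriv f) r + ((N : ℝ) - 1) / r * deriv f r

/-- The radial linearized operator `L₊,ₖ` with angular eigenvalue `λ_k = k(N+k-2)`. -/
def LplusRad (N : ℕ) (ω p : ℝ) (U : ℝ → ℝ) (k : ℕ) (v : ℝ → ℝ) (r : ℝ) : ℝ :=
  -(1 + 2 * U r ^ 2) *
      (deriv (deriv v) r + ((N : ℝ) - 1) / r * deriv v r
        - (k : ℝ) * ((N : ℝ) + (k : ℝ) - 2) / r ^ 2 * v r)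
    - 4 * U r * deriv U r * deriv v r + ω * v r
    - (2 * U r * lapRad N U r + lapRad N (fun s => U s ^ 2) r + p * U r ^ (p - 1)) * v r

/-- The radial linearized operator `L₋,ₖ` with angular eigenvalue `λ_k = k(N+k-2)`. -/
def LminusRad (N : ℕ) (ω p : ℝ) (U : ℝ → ℝ) (k : ℕ) (v : ℝ → ℝ) (r : ℝ) : ℝ :=
  -deriv (deriv v) r - ((N : ℝ) - 1) / r * deriv v r
    + (k : ℝ) * ((N : ℝ) + (k : ℝ) - 2) / r ^ 2 * v r + ω * v r
    - (lapRad N (fun s => U s ^ 2) r + U r ^ (p - 1)) * v r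

/-!
Let `q(y) = √(1 + 2y²)` and let `S` be its primitive. The dual variable `w = S(U)` turns (QLS) into
the semilinear equation `-Δw = f(w)`, with `f(S(y)) = (y ^ p - ω y) / q(y)`, and the linearized
equation into `-Δφ = f'(w) φ` for `φ = q(U) v`. It remains to show that `-Δ - f'(w)` has no bounded
radial kernel element vanishing at infinity.

If `φ` is nonzero, then `φ(0) ≠ 0` by uniqueness at the origin, say `φ(0) > 0`. The Wronskian of
`φ` with the translation mode `w'` shows that `φ` must have a first zero `r₀`, and comparison with
`r w'` shows that `f(w(r₀)) > 0`. Let `κ = s f'(s) / f(s)` at `s = w(r₀)`. The scaling mode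
`V = (κ - 1) r w' + 2w` satisfies `-ΔV - f'(w) V = 2 (κ f(w) - w f'(w))`. As the ratio
`s f'(s) / f(s)` is decreasing where `f > 0`, the right-hand side is positive before `r₀`, and it is
negative after `r₀`. Its sign before `r₀`, through the Wronskian of `V` and `φ`, gives `V(r₀) ≤ 0`.
The Pohozaev function of `w` is nonnegative, hence `r w' / w` is decreasing beyond `r₀` and `V ≤ 0`
there. By Sturm comparison with `V`, `φ` stays negative beyond `r₀` and its Wronskian with `V`
cannot tend to zero, contradicting the decay of `φ`.
-/

namespace QLS

open Set Asymptotics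

section Calculus

variable {f f' : ℝ → ℝ} {s : Set ℝ} {a b c : ℝ}

lemma monotoneOn_of_hasDerivAt_nonneg (hs : Convex ℝ s) (hf : ∀ x ∈ s, HasDerivAt f (f' x) x)
    (hf' : ∀ x ∈ interior s, 0 ≤ f' x) : MonotoneOn f s :=
  monotoneOn_of_hasDerivWithinAt_nonneg hs (fun x hx => (hf x hx).continuousAt.continuousWithinAt)
    (fun x hx => (hf x (interior_subset hx)).hasDerivWithinAt) hf'

lemma antitoneOn_of_hasDerivAt_nonpos (hs : Convex ℝ s) (hf : ∀ x ∈ s, HasDerivAt f (f' x) x)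
    (hf' : ∀ x ∈ interior s, f' x ≤ 0) : AntitoneOn f s :=
  antitoneOn_of_hasDerivWithinAt_nonpos hs (fun x hx => (hf x hx).continuousAt.continuousWithinAt)
    (fun x hx => (hf x (interior_subset hx)).hasDerivWithinAt) hf'

lemma strictMonoOn_of_hasDerivAt_pos (hs : Convex ℝ s) (hf : ∀ x ∈ s, HasDerivAt f (f' x) x)
    (hf' : ∀ x ∈ interior s, 0 < f' x) : StrictMonoOn f s :=
  strictMonoOn_of_hasDerivWithinAt_pos hs (fun x hx => (hf x hx).continuousAt.continuousWithinAt)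
    (fun x hx => (hf x (interior_subset hx)).hasDerivWithinAt) hf'

lemma le_of_monotoneOn_Ioc_of_tendsto (hab : a < b) (hf : MonotoneOn f (Ioc a b))
    (hc : Tendsto f (𝓝[>] a) (𝓝 c)) : c ≤ f b :=
  le_of_tendsto hc <| by
    filter_upwards [Ioc_mem_nhdsGT hab] with x hx using hf hx (right_mem_Ioc.2 hab) hx.2

lemma le_of_antitoneOn_Ioc_of_tendsto (hab : a < b) (hf : AntitoneOn f (Ioc a b))
    (hc : Tendsto f (𝓝[>] a) (𝓝 c)) : f b ≤ c :=
  ge_of_tendsto hc <| by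
    filter_upwards [Ioc_mem_nhdsGT hab] with x hx using hf hx (right_mem_Ioc.2 hab) hx.2

lemma le_of_monotoneOn_Ici_of_tendsto {l : Filter ℝ} [l.NeBot] (hl : l ≤ atTop)
    (hf : MonotoneOn f (Ici a)) (hc : Tendsto f l (𝓝 c)) : f a ≤ c :=
  ge_of_tendsto hc <| by
    filter_upwards [hl (Ici_mem_atTop a)] with x hx using hf self_mem_Ici hx hx

lemma le_of_antitoneOn_Ici_of_tendsto {l : Filter ℝ} [l.NeBot] (hl : l ≤ atTop)
    (hf : AntitoneOn f (Ici a)) (hc : Tendsto f l (𝓝 c)) : c ≤ f a :=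
  le_of_tendsto hc <| by
    filter_upwards [hl (Ici_mem_atTop a)] with x hx using hf self_mem_Ici hx hx

lemma eq_of_monotoneOn_Ioi_of_tendsto {l : Filter ℝ} [l.NeBot] (hl : l ≤ atTop) (hab : a < b)
    (hf : MonotoneOn f (Ioi a)) (ha : Tendsto f (𝓝[>] a) (𝓝 c)) (hc : Tendsto f l (𝓝 c)) :
    f b = c :=
  le_antisymm
    (le_of_monotoneOn_Ici_of_tendsto hl (hf.mono fun _ hx => hab.trans_le hx) hc)
    (le_of_monotoneOn_Ioc_of_tendsto hab (hf.mono Ioc_subset_Ioi_self) ha)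

lemma tendsto_nhdsGT_of_continuousOn_Ici (hf : ContinuousOn f (Ici a)) :
    Tendsto f (𝓝[>] a) (𝓝 (f a)) :=
  (hf a self_mem_Ici).mono_left (nhdsWithin_mono _ Ioi_subset_Ici_self)

lemma hasDerivAt_pow_of_ne_zero (k : ℕ) {r : ℝ} (hr : r ≠ 0) :
    HasDerivAt (fun r : ℝ => r ^ k) (k / r * r ^ k) r := by
  refine (hasDerivAt_pow k r).congr_deriv ?_
  rcases k with _ | k
  · simp
  · field_simp
    simp [pow_succ]

lemma tendsto_id_nhdsGT_zero : Tendsto (fun r : ℝ => r) (𝓝[>] 0) (𝓝 0) :=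
  tendsto_id.mono_left nhdsWithin_le_nhds

lemma tendsto_pow_nhdsGT_zero {k : ℕ} (hk : 1 ≤ k) :
    Tendsto (fun r : ℝ => r ^ k) (𝓝[>] 0) (𝓝 0) := by
  simpa [Nat.one_le_iff_ne_zero.1 hk] using tendsto_id_nhdsGT_zero.pow k

lemma exists_least_zero (hf : ContinuousOn f (Ioi a)) (hpos : ∀ᶠ x in 𝓝[>] a, 0 < f x)
    (hab : a < b) (hb : f b ≤ 0) : ∃ c > a, f c = 0 ∧ ∀ x ∈ Ioo a c, 0 < f x := by
  obtain ⟨d, hd, hpos_d⟩ := mem_nhdsGT_iff_exists_Ioc_subset.1 hpos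
  have hdb : d < b := not_le.1 fun h => hb.not_gt (hpos_d ⟨hab, h⟩)
  have hcont : ContinuousOn f (Icc d b) := hf.mono fun x hx => lt_of_lt_of_le hd hx.1
  have hcompact : IsCompact (Icc d b ∩ f ⁻¹' Iic 0) :=
    isCompact_Icc.of_isClosed_subset
      (hcont.preimage_isClosed_of_isClosed isClosed_Icc isClosed_Iic) inter_subset_left
  obtain ⟨c, ⟨⟨hdc, hcb⟩, hfc⟩, hleast⟩ :=
    hcompact.exists_isLeast ⟨b, right_mem_Icc.2 hdb.le, hb⟩
  have hpos_c : ∀ x ∈ Ioo a c, 0 < f x := fun x hx => by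
    rcases le_total x d with hxd | hdx
    · exact hpos_d ⟨hx.1, hxd⟩
    · exact not_le.1 fun h => hx.2.not_ge (hleast ⟨⟨hdx, hx.2.le.trans hcb⟩, h⟩)
  have hac : a < c := lt_of_lt_of_le hd hdc
  refine ⟨c, hac, le_antisymm hfc ?_, hpos_c⟩
  refine ge_of_tendsto ((hf.continuousAt (Ioi_mem_nhds hac)).tendsto.mono_left
    nhdsWithin_le_nhds : Tendsto f (𝓝[<] c) (𝓝 (f c))) ?_
  filter_upwards [Ioo_mem_nhdsLT hac] with x hx using (hpos_c x hx).le

lemma eventually_lt_zero_nhdsGT_of_hasDerivAt_neg {d : ℝ} (hf : HasDerivAt f d a) (hfa : f a = 0)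
    (hd : d < 0) : ∀ᶠ x in 𝓝[>] a, f x < 0 := by
  have hsign := eventually_nhdsWithin_sign_eq_of_deriv_neg (hf.deriv.symm ▸ hd) hfa
  filter_upwards [hsign.filter_mono nhdsWithin_le_nhds, self_mem_nhdsWithin] with x hx hax
  rwa [sign_eq_neg_one_iff.2 (sub_neg.2 hax), sign_eq_neg_one_iff] at hx

lemma deriv_nonpos_of_pos_left {d : ℝ} (hf : HasDerivAt f d b) (hfb : f b = 0) (hab : a < b)
    (hpos : ∀ x ∈ Ioo a b, 0 < f x) : d ≤ 0 := by
  have hslope := hf.hasDerivWithinAt (s := Iio b)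
  rw [hasDerivWithinAt_iff_tendsto_slope' self_notMem_Iio] at hslope
  refine le_of_tendsto hslope ?_
  filter_upwards [Ioo_mem_nhdsLT hab] with x hx
  rw [slope_def_field, hfb]
  exact div_nonpos_of_nonneg_of_nonpos (by linarith [hpos x hx]) (by linarith [hx.2])

lemma frequently_deriv_lt_div_of_tendsto {d : ℝ} (hd : 0 < d)
    (hf : ∀ r, 0 < r → HasDerivAt f (f' r) r) (ha : Tendsto f (𝓝[>] 0) (𝓝 a)) :
    ∃ᶠ r in 𝓝[>] (0 : ℝ), f' r < d / r := by
  intro hlarge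
  obtain ⟨b, hb, hlarge⟩ := mem_nhdsGT_iff_exists_Ioc_subset.1 hlarge
  have hmono : MonotoneOn (fun r => f r - d * log r) (Ioc 0 b) := by
    refine monotoneOn_of_hasDerivAt_nonneg (convex_Ioc 0 b)
      (fun r hr => (hf r hr.1).sub ((hasDerivAt_log hr.1.ne').const_mul d)) fun r hr => ?_
    have := not_lt.1 (hlarge (interior_subset hr))
    rw [div_eq_mul_inv] at this
    linarith
  have hlog : Tendsto (fun r => f r - d * log r) (𝓝[>] 0) atTop := by
    simpa only [sub_eq_add_neg, Function.comp_def] using ha.add_atTop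
      (tendsto_neg_atBot_atTop.comp (tendsto_log_nhdsGT_zero.const_mul_atBot hd))
  refine (hlog.eventually_gt_atTop (f b - d * log b)).frequently ?_
  filter_upwards [Ioc_mem_nhdsGT hb] with r hr
  exact not_lt.2 (hmono hr (right_mem_Ioc.2 hb) hr.2)

end Calculus

section AtInfinity

lemma tendsto_pow_mul_of_exp_decay {g : ℝ → ℝ} {C δ : ℝ} (hδ : 0 < δ)
    (hg : ∀ r, 0 < r → |g r| ≤ C * exp (-δ * r)) (j : ℕ) :
    Tendsto (fun r => r ^ j * g r) atTop (𝓝 0) := by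
  have hlim := (tendsto_rpow_mul_exp_neg_mul_atTop_nhds_zero (j : ℝ) δ hδ).const_mul C
  rw [mul_zero] at hlim
  refine squeeze_zero_norm' ?_ hlim
  filter_upwards [eventually_gt_atTop 0] with r hr
  rw [norm_mul, norm_eq_abs (g r), norm_of_nonneg (pow_pos hr j).le, rpow_natCast, mul_left_comm C]
  gcongr
  exact hg r hr

lemma frequently_lt_of_integrableOn_Ioi {g : ℝ → ℝ} {a c : ℝ} (hg : IntegrableOn g (Ioi a))
    (hc : 0 < c) : ∃ᶠ r in atTop, g r < c := by
  intro hge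
  obtain ⟨b, hb⟩ := eventually_atTop.1 hge
  have hconst : IntegrableOn (fun _ : ℝ => c) (Ioi (max a b)) := by
    refine Integrable.mono' (hg.mono_set (Ioi_subset_Ioi (le_max_left a b)))
      aestronglyMeasurable_const ?_
    filter_upwards [ae_restrict_mem measurableSet_Ioi] with r hr
    rw [norm_of_nonneg hc.le]
    exact not_lt.1 (hb r ((le_max_right a b).trans (le_of_lt hr)))
  simp [integrableOn_const_iff, hc.ne'] at hconst

lemma exists_tendsto_zero_of_integrableOn {v w : ℝ → ℝ} {k : ℕ}
    (h : IntegrableOn (fun r => (v r ^ 2 + w r ^ 2) * r ^ k) (Ioi 0)) :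
    ∃ l : Filter ℝ, l.NeBot ∧ l ≤ atTop ∧ Tendsto v l (𝓝 0) ∧ Tendsto w l (𝓝 0) := by
  have hcluster : MapClusterPt (0 : ℝ × ℝ) atTop fun r => (v r, w r) := by
    refine (Metric.nhds_basis_ball.mapClusterPt_iff_frequently).2 fun ε hε => ?_
    refine ((frequently_lt_of_integrableOn_Ioi h (pow_pos hε 2)).and_eventually
      (eventually_ge_atTop 1)).mono fun r ⟨hlt, hr⟩ => ?_
    have hsum : v r ^ 2 + w r ^ 2 < ε ^ 2 :=
      (le_mul_of_one_le_right (by positivity) (one_le_pow₀ hr)).trans_lt hlt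
    have hv : |v r| < ε := abs_lt_of_sq_lt_sq (by nlinarith [sq_nonneg (w r)]) hε.le
    have hw : |w r| < ε := abs_lt_of_sq_lt_sq (by nlinarith [sq_nonneg (v r)]) hε.le
    rw [mem_ball_zero_iff, Prod.norm_def]
    exact max_lt hv hw
  obtain ⟨l, hl, hlim⟩ := mapClusterPt_iff_ultrafilter.1 hcluster
  exact ⟨l, l.neBot, hl, (continuous_fst.tendsto 0).comp hlim,
    (continuous_snd.tendsto 0).comp hlim⟩

end AtInfinity

/-- `φ' = ψ` and `φ'' + (k / r) φ' = -h` on `(0, ∞)`: the radial Poisson equation in dimension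
`k + 1`, written as a first-order system with `ψ` as the name of `φ'`. -/
structure RadialPoisson (k : ℕ) (h φ ψ : ℝ → ℝ) : Prop where
  hasDerivAt : ∀ r, 0 < r → HasDerivAt φ (ψ r) r
  hasDerivAt_deriv : ∀ r, 0 < r → HasDerivAt ψ (-(k / r) * ψ r - h r) r

/-- The Wronskian of `(φ, φ')` and `(χ, χ')`, weighted by the radial volume density `r ^ k`. -/
def wronskian (k : ℕ) (φ φ' χ χ' : ℝ → ℝ) (r : ℝ) : ℝ :=
  r ^ k * (φ r * χ' r - χ r * φ' r)

namespace RadialPoisson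

variable {k : ℕ} {h g φ ψ χ η : ℝ → ℝ} {a r B : ℝ}

lemma neg (H : RadialPoisson k h φ ψ) : RadialPoisson k (-h) (-φ) (-ψ) where
  hasDerivAt r hr := (H.hasDerivAt r hr).neg
  hasDerivAt_deriv r hr := (H.hasDerivAt_deriv r hr).neg.congr_deriv (by
    simp only [Pi.neg_apply]
    ring)

lemma linearCombination (H : RadialPoisson k h φ ψ) (G : RadialPoisson k g χ η) (α β : ℝ) :
    RadialPoisson k (fun r => α * h r + β * g r) (fun r => α * φ r + β * χ r)
      (fun r => α * ψ r + β * η r) where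
  hasDerivAt r hr := ((H.hasDerivAt r hr).const_mul α).add ((G.hasDerivAt r hr).const_mul β)
  hasDerivAt_deriv r hr :=
    (((H.hasDerivAt_deriv r hr).const_mul α).add
      ((G.hasDerivAt_deriv r hr).const_mul β)).congr_deriv (by ring)

lemma dilation {h' : ℝ → ℝ} (H : RadialPoisson k h φ ψ)
    (hh : ∀ r, 0 < r → HasDerivAt h (h' r) r) :
    RadialPoisson k (fun r => 2 * h r + r * h' r) (fun r => r * ψ r)
      (fun r => (1 - k) * ψ r - r * h r) where
  hasDerivAt r hr := ((hasDerivAt_id' r).mul (H.hasDerivAt_deriv r hr)).congr_deriv (by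
    field_simp
    ring)
  hasDerivAt_deriv r hr :=
    (((H.hasDerivAt_deriv r hr).const_mul (1 - k : ℝ)).sub
      ((hasDerivAt_id' r).mul (hh r hr))).congr_deriv (by
        field_simp
        ring)

lemma translation {h' : ℝ → ℝ} (H : RadialPoisson k h φ ψ)
    (hh : ∀ r, 0 < r → HasDerivAt h (h' r) r) :
    RadialPoisson k (fun r => h' r - k / r ^ 2 * ψ r) ψ (fun r => -(k / r) * ψ r - h r) where
  hasDerivAt := H.hasDerivAt_deriv
  hasDerivAt_deriv r hr := by
    have hkr : HasDerivAt (fun r : ℝ => -(k / r : ℝ)) (k / r ^ 2) r :=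
      (((hasDerivAt_inv hr.ne').const_mul (k : ℝ)).neg).congr_deriv (by ring)
    exact ((hkr.mul (H.hasDerivAt_deriv r hr)).sub (hh r hr)).congr_deriv (by ring)

lemma hasDerivAt_pow_mul_deriv (H : RadialPoisson k h φ ψ) (hr : 0 < r) :
    HasDerivAt (fun r => r ^ k * ψ r) (-(r ^ k * h r)) r :=
  ((hasDerivAt_pow_of_ne_zero k hr.ne').mul (H.hasDerivAt_deriv r hr)).congr_deriv (by ring)

lemma hasDerivAt_wronskian (H : RadialPoisson k h φ ψ) (G : RadialPoisson k g χ η) (hr : 0 < r) :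
    HasDerivAt (wronskian k φ ψ χ η) (r ^ k * (h r * χ r - φ r * g r)) r := by
  have hφη := (H.hasDerivAt r hr).mul (G.hasDerivAt_deriv r hr)
  have hχψ := (G.hasDerivAt r hr).mul (H.hasDerivAt_deriv r hr)
  exact ((hasDerivAt_pow_of_ne_zero k hr.ne').mul (hφη.sub hχψ)).congr_deriv (by
    simp only [Pi.sub_apply, Pi.mul_apply]
    ring)

/-! ### Regularity at the origin -/

-- If `ψ r > B r`, then `s ^ k ψ s` is bounded below on `(0, r]`, so that `φ` blows up at the origin
-- at least like a logarithm.
lemma deriv_le_mul (H : RadialPoisson k h φ ψ) (hk : 1 ≤ k) (ha : Tendsto φ (𝓝[>] 0) (𝓝 a))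
    (hr : 0 < r) (hB : ∀ s ∈ Ioc 0 r, |h s| ≤ B) : ψ r ≤ B * r := by
  by_contra! hlt
  set d := r ^ k * (ψ r - B * r)
  have hd_pos : 0 < d := mul_pos (pow_pos hr k) (sub_pos.2 hlt)
  have hB0 : 0 ≤ B := (abs_nonneg _).trans (hB r (right_mem_Ioc.2 hr))
  have hanti : AntitoneOn (fun s => s ^ k * ψ s - B * r ^ k * s) (Ioc 0 r) := by
    refine antitoneOn_of_hasDerivAt_nonpos (convex_Ioc 0 r) (fun s hs =>
      (H.hasDerivAt_pow_mul_deriv hs.1).sub ((hasDerivAt_id' s).const_mul (B * r ^ k)))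
      fun s hs => ?_
    have hs' := interior_subset hs
    have hpow : s ^ k * -h s ≤ r ^ k * B :=
      (mul_le_mul_of_nonneg_left ((neg_le_abs _).trans (hB s hs')) (pow_pos hs'.1 k).le).trans
        (mul_le_mul_of_nonneg_right (pow_le_pow_left₀ hs'.1.le hs'.2 k) hB0)
    linarith
  refine frequently_deriv_lt_div_of_tendsto hd_pos H.hasDerivAt ha ?_
  filter_upwards [Ioc_mem_nhdsGT hr, Ioc_mem_nhdsGT one_pos] with s hs hs1
  have hds : d ≤ s ^ k * ψ s := by
    have := hanti hs (right_mem_Ioc.2 hr) hs.2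
    have : 0 ≤ B * r ^ k * s := by have := hs.1; positivity
    simp only at *
    linarith
  have hψs : 0 ≤ ψ s := (pos_of_mul_pos_right (hd_pos.trans_le hds) (pow_pos hs.1 k).le).le
  have hsk : s ^ k ≤ s := pow_le_of_le_one hs1.1.le hs1.2 (by omega)
  rw [not_lt, div_le_iff₀ hs.1]
  nlinarith

lemma abs_deriv_le_mul (H : RadialPoisson k h φ ψ) (hk : 1 ≤ k)
    (ha : Tendsto φ (𝓝[>] 0) (𝓝 a)) (hr : 0 < r) (hB : ∀ s ∈ Ioc 0 r, |h s| ≤ B) :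
    |ψ r| ≤ B * r :=
  abs_le'.2 ⟨H.deriv_le_mul hk ha hr hB,
    H.neg.deriv_le_mul hk ha.neg hr fun s hs => (abs_neg (h s)).trans_le (hB s hs)⟩

lemma isBigO_deriv_id (H : RadialPoisson k h φ ψ) (hk : 1 ≤ k) (ha : Tendsto φ (𝓝[>] 0) (𝓝 a))
    (hh : h =O[𝓝[>] 0] (1 : ℝ → ℝ)) : ψ =O[𝓝[>] 0] (id : ℝ → ℝ) := by
  obtain ⟨B, hB⟩ := hh.bound
  obtain ⟨R, hR, hB⟩ := mem_nhdsGT_iff_exists_Ioc_subset.1 hB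
  refine IsBigO.of_bound B ?_
  filter_upwards [Ioc_mem_nhdsGT hR] with r hr
  have := H.abs_deriv_le_mul hk ha hr.1 fun s hs => by
    simpa using hB ⟨hs.1, hs.2.trans hr.2⟩
  simpa [abs_of_pos hr.1] using this

lemma tendsto_deriv_nhdsGT_zero (H : RadialPoisson k h φ ψ) (hk : 1 ≤ k)
    (ha : Tendsto φ (𝓝[>] 0) (𝓝 a)) (hh : h =O[𝓝[>] 0] (1 : ℝ → ℝ)) :
    Tendsto ψ (𝓝[>] 0) (𝓝 0) :=
  (H.isBigO_deriv_id hk ha hh).trans_tendsto tendsto_id_nhdsGT_zero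

end RadialPoisson

lemma tendsto_wronskian_nhdsGT_zero {k : ℕ} {φ φ' χ χ' : ℝ → ℝ} (hk : 1 ≤ k)
    (hφ : φ =O[𝓝[>] 0] (1 : ℝ → ℝ)) (hφ' : φ' =O[𝓝[>] 0] (1 : ℝ → ℝ))
    (hχ : χ =O[𝓝[>] 0] (1 : ℝ → ℝ)) (hχ' : χ' =O[𝓝[>] 0] (1 : ℝ → ℝ)) :
    Tendsto (wronskian k φ φ' χ χ') (𝓝[>] 0) (𝓝 0) := by
  have hO : wronskian k φ φ' χ χ' =O[𝓝[>] 0] fun r : ℝ => r ^ k := by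
    refine ((isBigO_refl (fun r : ℝ => r ^ k) (𝓝[>] 0)).mul
      ((hφ.mul hχ').sub (hχ.mul hφ'))).congr_right fun r => ?_
    simp
  exact hO.trans_tendsto (tendsto_pow_nhdsGT_zero hk)

lemma tendsto_wronskian_of_tendsto_pow_mul {k : ℕ} {φ φ' χ χ' : ℝ → ℝ} {l : Filter ℝ}
    (hφ : Tendsto (fun r => r ^ k * φ r) l (𝓝 0)) (hφ' : Tendsto (fun r => r ^ k * φ' r) l (𝓝 0))
    (hχ : Tendsto χ l (𝓝 0)) (hχ' : Tendsto χ' l (𝓝 0)) :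
    Tendsto (wronskian k φ φ' χ χ') l (𝓝 0) := by
  have := (hφ.mul hχ').sub (hχ.mul hφ')
  simp only [mul_zero, sub_zero] at this
  exact this.congr fun r => by unfold wronskian; ring

namespace RadialPoisson

variable {k : ℕ} {h c φ ψ V V' : ℝ → ℝ} {a r : ℝ}

/-! ### Uniqueness for the linear equation -/

lemma energy_deriv_le {k : ℕ} {x y c M r : ℝ} (hr : 0 < r) (hc : |c| ≤ M) :
    2 * (x * y + y * (-(k / r) * y - c * x)) ≤ (1 + M) * (x ^ 2 + y ^ 2) := by
  have hfriction : 0 ≤ k / r * y ^ 2 := by positivity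
  have hcross : (1 - c) * (2 * (x * y)) ≤ (1 + M) * (x ^ 2 + y ^ 2) := by
    refine (le_abs_self _).trans ?_
    rw [abs_mul]
    have h1c : |1 - c| ≤ 1 + M := (abs_sub _ _).trans (by simpa using hc)
    have hxy : |2 * (x * y)| ≤ x ^ 2 + y ^ 2 :=
      abs_le.2 ⟨by nlinarith [sq_nonneg (x + y)], by nlinarith [sq_nonneg (x - y)]⟩
    have h1M : 0 ≤ 1 + M := (abs_nonneg _).trans h1c
    gcongr
  linarith

-- The friction term `(k / r) φ'` has a sign, so the energy `φ² + φ'²` grows at most exponentially.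
lemma eq_zero_of_tendsto_nhdsGT_zero (H : RadialPoisson k (fun r => c r * φ r) φ ψ)
    (hc : ∀ R, ∃ M, ∀ s ∈ Ioc 0 R, |c s| ≤ M) (hφ : Tendsto φ (𝓝[>] 0) (𝓝 0))
    (hψ : Tendsto ψ (𝓝[>] 0) (𝓝 0)) (hr : 0 < r) : φ r = 0 := by
  obtain ⟨M, hM⟩ := hc r
  set E : ℝ → ℝ := fun s => (φ s ^ 2 + ψ s ^ 2) * exp (-(1 + M) * s)
  have hanti : AntitoneOn E (Ioc 0 r) := by
    refine antitoneOn_of_hasDerivAt_nonpos (convex_Ioc 0 r) (fun s hs =>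
      (((H.hasDerivAt s hs.1).pow 2).add ((H.hasDerivAt_deriv s hs.1).pow 2)).mul
        ((hasDerivAt_id' s).const_mul (-(1 + M))).exp) fun s hs => ?_
    have hs' := interior_subset hs
    have := mul_nonneg (sub_nonneg.2 (energy_deriv_le (k := k) (x := φ s) (y := ψ s) hs'.1
      (hM s hs'))) (exp_pos (-(1 + M) * s)).le
    simp only [Pi.add_apply, Pi.pow_apply, Nat.cast_ofNat, Nat.add_one_sub_one, pow_one]
    linarith
  have hlim : Tendsto E (𝓝[>] 0) (𝓝 0) := by
    have hexp : Tendsto (fun s : ℝ => exp (-(1 + M) * s)) (𝓝[>] 0) (𝓝 (exp (-(1 + M) * 0))) :=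
      (tendsto_id_nhdsGT_zero.const_mul _).rexp
    have := ((hφ.pow 2).add (hψ.pow 2)).mul hexp
    rwa [zero_pow two_ne_zero, add_zero, zero_mul] at this
  have hEr : E r ≤ 0 := le_of_antitoneOn_Ioc_of_tendsto hr hanti hlim
  have hle : φ r ^ 2 + ψ r ^ 2 ≤ 0 := nonpos_of_mul_nonpos_left hEr (exp_pos _)
  nlinarith [sq_nonneg (φ r), sq_nonneg (ψ r)]

lemma lipschitzWith_radialField {c M x t : ℝ} (hx : 0 < x) (hxt : x ≤ t) (hc : |c| ≤ M) :
    LipschitzWith (1 + k / x + M).toNNReal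
      (fun y : ℝ × ℝ => (y.2, -(k / t) * y.2 - c * y.1)) := by
  have ht := hx.trans_le hxt
  have hM : 0 ≤ M := (abs_nonneg c).trans hc
  refine LipschitzWith.of_dist_le_mul fun y y' => ?_
  rw [Real.coe_toNNReal _ (by positivity), Prod.dist_eq]
  have hfst : |y.1 - y'.1| ≤ dist y y' := le_max_left (dist y.1 y'.1) (dist y.2 y'.2)
  have hsnd : |y.2 - y'.2| ≤ dist y y' := le_max_right (dist y.1 y'.1) (dist y.2 y'.2)
  have hkx : 0 ≤ k / x * dist y y' := by positivity
  refine max_le ?_ ?_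
  · have : 0 ≤ M * dist y y' := by positivity
    rw [Real.dist_eq]
    linarith
  · have hk : |k / t * (y.2 - y'.2)| ≤ k / x * dist y y' := by
      rw [abs_mul, abs_of_nonneg (by positivity)]
      gcongr
    have hcd : |c * (y.1 - y'.1)| ≤ M * dist y y' := by
      rw [abs_mul]
      gcongr
    calc dist (-(k / t) * y.2 - c * y.1) (-(k / t) * y'.2 - c * y'.1)
        = |k / t * (y.2 - y'.2) + c * (y.1 - y'.1)| := by
          rw [Real.dist_eq, ← abs_neg]
          ring_nf
      _ ≤ (1 + k / x + M) * dist y y' := by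
          have := abs_add_le (k / t * (y.2 - y'.2)) (c * (y.1 - y'.1))
          linarith [dist_nonneg (x := y) (y := y')]

lemma eq_zero_of_eq_zero (H : RadialPoisson k (fun r => c r * φ r) φ ψ)
    (hc : ∀ R, ∃ M, ∀ s ∈ Ioc 0 R, |c s| ≤ M) (ha : 0 < a) (hφ : φ a = 0) (hψ : ψ a = 0)
    (hr : 0 < r) : φ r = 0 := by
  obtain ⟨M, hM⟩ := hc (a + r)
  have hx : 0 < min a r / 2 := half_pos (lt_min ha hr)
  have hxa : min a r / 2 < a := (half_lt_self (lt_min ha hr)).trans_le (min_le_left a r)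
  have hxr : min a r / 2 < r := (half_lt_self (lt_min ha hr)).trans_le (min_le_right a r)
  have hunique := ODE_solution_unique_of_mem_Ioo (E := ℝ × ℝ)
    (v := fun t y => (y.2, -(k / t) * y.2 - c t * y.1)) (s := fun _ => univ)
    (K := (1 + k / (min a r / 2) + M).toNNReal) (a := min a r / 2) (b := a + r) (t₀ := a)
    (f := fun t => (φ t, ψ t)) (g := fun _ => 0)
    (fun t ht => (lipschitzWith_radialField hx ht.1.le
      (hM t ⟨hx.trans ht.1, ht.2.le⟩)).lipschitzOnWith)
    ⟨hxa, by linarith⟩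
    (fun t ht => ⟨(H.hasDerivAt t (hx.trans ht.1)).prodMk
      (H.hasDerivAt_deriv t (hx.trans ht.1)), mem_univ _⟩)
    (fun t _ => ⟨(hasDerivAt_const t (0 : ℝ × ℝ)).congr_deriv (Prod.ext (by simp) (by simp)),
      mem_univ _⟩)
    (by simp [hφ, hψ])
  exact congrArg Prod.fst (hunique ⟨hxr, by linarith⟩)

/-! ### Sturm comparison -/

lemma strictMonoOn_wronskian {s : Set ℝ} (HV : RadialPoisson k h V V')
    (H : RadialPoisson k (fun r => c r * φ r) φ ψ) (hs : Convex ℝ s) (hpos : ∀ r ∈ s, 0 < r)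
    (hh : ∀ r ∈ interior s, h r < c r * V r) (hφ : ∀ r ∈ interior s, φ r < 0) :
    StrictMonoOn (wronskian k V V' φ ψ) s :=
  strictMonoOn_of_hasDerivAt_pos hs (fun r hr => HV.hasDerivAt_wronskian H (hpos r hr))
    fun r hr => mul_pos (pow_pos (hpos r (interior_subset hr)) k)
      (by nlinarith [hh r hr, hφ r hr])

lemma neg_of_sturm_comparison (HV : RadialPoisson k h V V')
    (H : RadialPoisson k (fun r => c r * φ r) φ ψ) (ha : 0 < a) (hφ : φ a = 0) (hψ : ψ a < 0)
    (hV : ∀ r, a ≤ r → V r ≤ 0) (hh : ∀ r, a < r → h r < c r * V r) (hr : a < r) : φ r < 0 := by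
  by_contra! hφr
  obtain ⟨b, hab, hφb, hneg⟩ := exists_least_zero (f := -φ)
    (fun s hs => (H.hasDerivAt s (ha.trans hs)).neg.continuousAt.continuousWithinAt)
    ((eventually_lt_zero_nhdsGT_of_hasDerivAt_neg (H.hasDerivAt a ha) hφ hψ).mono
      fun s hs => neg_pos.2 hs) hr (neg_nonpos.2 hφr)
  have hψb : -ψ b ≤ 0 :=
    deriv_nonpos_of_pos_left (H.hasDerivAt b (ha.trans hab)).neg hφb hab hneg
  have hmono : StrictMonoOn (wronskian k V V' φ ψ) (Icc a b) := by
    refine HV.strictMonoOn_wronskian H (convex_Icc a b) (fun s hs => ha.trans_le hs.1) ?_ ?_ <;>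
      rw [interior_Icc]
    · exact fun s hs => hh s hs.1
    · exact fun s hs => neg_pos.1 (hneg s hs)
  have hlt := hmono (left_mem_Icc.2 hab.le) (right_mem_Icc.2 hab.le) hab
  rw [wronskian, wronskian, hφ, neg_eq_zero.1 hφb, zero_mul, zero_mul, sub_zero, sub_zero] at hlt
  have hleft : 0 ≤ a ^ k * (V a * ψ a) :=
    mul_nonneg (by positivity) (mul_nonneg_of_nonpos_of_nonpos (hV a le_rfl) hψ.le)
  have hright : b ^ k * (V b * ψ b) ≤ 0 :=
    mul_nonpos_of_nonneg_of_nonpos (pow_pos (ha.trans hab) k).le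
      (mul_nonpos_of_nonpos_of_nonneg (hV b hab.le) (by linarith))
  linarith

lemma not_tendsto_wronskian {l : Filter ℝ} [l.NeBot] (hl : l ≤ atTop)
    (HV : RadialPoisson k h V V') (H : RadialPoisson k (fun r => c r * φ r) φ ψ) (ha : 0 < a)
    (hφ : φ a = 0) (hψ : ψ a < 0) (hV : ∀ r, a ≤ r → V r ≤ 0) (hh : ∀ r, a < r → h r < c r * V r) :
    ¬ Tendsto (wronskian k V V' φ ψ) l (𝓝 0) := by
  intro hlim
  have hmono : StrictMonoOn (wronskian k V V' φ ψ) (Ici a) := by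
    refine HV.strictMonoOn_wronskian H (convex_Ici a) (fun s hs => ha.trans_le hs) ?_ ?_ <;>
      rw [interior_Ici]
    · exact fun s hs => hh s hs
    · exact fun s hs => HV.neg_of_sturm_comparison H ha hφ hψ hV hh hs
  have hlast : wronskian k V V' φ ψ (a + 1) ≤ 0 := le_of_monotoneOn_Ici_of_tendsto hl
    (hmono.monotoneOn.mono (Ici_subset_Ici.2 (by linarith))) hlim
  have hlt := hmono self_mem_Ici (mem_Ici.2 (by linarith : a ≤ a + 1)) (by linarith)
  have hfirst : 0 ≤ wronskian k V V' φ ψ a := by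
    rw [wronskian, hφ, zero_mul, sub_zero]
    exact mul_nonneg (by positivity) (mul_nonneg_of_nonpos_of_nonpos (hV a le_rfl) hψ.le)
  linarith

end RadialPoisson

/-- The primitive of the nonlinearity `f` vanishing at the origin. -/
def potential (f : ℝ → ℝ) (s : ℝ) : ℝ :=
  ∫ t in (0 : ℝ)..s, f t

/-- The logarithmic derivative `s f'(s) / f(s)`, which is constant for a pure power. -/
def growthIndex (f : ℝ → ℝ) (s : ℝ) : ℝ :=
  s * deriv f s / f s

/-- The integrand of Pohozaev's identity for `-Δw = f(w)` in dimension `k + 1`. -/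
def pohozaevDensity (k : ℕ) (f : ℝ → ℝ) (s : ℝ) : ℝ :=
  2 * (k + 1) * potential f s - (k - 1) * (s * f s)

/-- The structural conditions on `f` under which positive decaying radial solutions of
`-Δw = f(w)` in dimension `k + 1` are radially nondegenerate. They describe a nonlinearity which
is first negative and then positive, with decreasing growth index on the positive part. -/
structure AdmissibleNonlinearity (k : ℕ) (f : ℝ → ℝ) : Prop where
  continuous : Continuous f
  isBigO_id : f =O[𝓝 0] (id : ℝ → ℝ)
  differentiableAt : ∀ s, 0 < s → DifferentiableAt ℝ f s
  continuousAt_deriv : ∀ s, 0 < s → ContinuousAt (deriv f) s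
  pos_of_nonneg : ∀ s t, 0 < s → s < t → 0 ≤ f s → 0 < f t
  lt_mul_deriv : ∀ s, 0 < s → f s ≤ 0 → f s < s * deriv f s
  growthIndex_lt : ∀ s t, 0 < s → s < t → 0 < f s → growthIndex f t < growthIndex f s
  pohozaevDensity_pos : ∀ s t, 0 < s → s < t → 0 < pohozaevDensity k f s →
    0 < pohozaevDensity k f t

/-- A positive, strictly decreasing, rapidly decaying radial solution `w` of `-Δw = f(w)` in
dimension `k + 1`, with `z = w'`. -/
structure RadialGroundState (k : ℕ) (f w z : ℝ → ℝ) : Prop where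
  equation : RadialPoisson k (fun r => f (w r)) w z
  pos : ∀ r, 0 < r → 0 < w r
  strictAntiOn : StrictAntiOn w (Ioi 0)
  exists_tendsto : ∃ a, Tendsto w (𝓝[>] 0) (𝓝 a)
  tendsto_pow_mul : ∀ j : ℕ, Tendsto (fun r => r ^ j * w r) atTop (𝓝 0)
  tendsto_pow_mul_deriv : ∀ j : ℕ, Tendsto (fun r => r ^ j * z r) atTop (𝓝 0)

/-- A radial solution `φ`, with `ψ = φ'`, of the linearization `-Δφ = f'(w) φ`. The decay at
infinity is only required along some filter, as is all that square integrability provides. -/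
structure LinearizedSolution (k : ℕ) (f w φ ψ : ℝ → ℝ) : Prop where
  equation : RadialPoisson k (fun r => deriv f (w r) * φ r) φ ψ
  exists_tendsto : ∃ a, Tendsto φ (𝓝[>] 0) (𝓝 a)
  exists_tendsto_zero : ∃ l : Filter ℝ, l.NeBot ∧ l ≤ atTop ∧
    Tendsto φ l (𝓝 0) ∧ Tendsto ψ l (𝓝 0)

/-- The Pohozaev function of a radial solution `w` with `z = w'`. -/
def pohozaev (k : ℕ) (f w z : ℝ → ℝ) (r : ℝ) : ℝ :=
  r ^ (k + 1) * (z r ^ 2 + 2 * potential f (w r)) + (k - 1) * (r ^ k * (w r * z r))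

/-- The variation `α r w' + β w` of `w` under rescalings of space and amplitude, with `z = w'`. -/
def scalingMode (α β : ℝ) (w z : ℝ → ℝ) (r : ℝ) : ℝ :=
  α * (r * z r) + β * w r

/-- The derivative of `scalingMode α β w z` when `w` solves `-Δw = f(w)` in dimension `k + 1`. -/
def scalingModeDeriv (k : ℕ) (f : ℝ → ℝ) (α β : ℝ) (w z : ℝ → ℝ) (r : ℝ) : ℝ :=
  α * ((1 - k) * z r - r * f (w r)) + β * z r

section Potential

variable {f : ℝ → ℝ}

lemma hasDerivAt_potential (hf : Continuous f) (s : ℝ) : HasDerivAt (potential f) (f s) s :=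
  (hf.integral_hasStrictDerivAt 0 s).hasDerivAt

lemma continuous_potential (hf : Continuous f) : Continuous (potential f) :=
  continuous_iff_continuousAt.2 fun s => (hasDerivAt_potential hf s).continuousAt

lemma potential_zero : potential f 0 = 0 :=
  intervalIntegral.integral_same

lemma potential_isBigO_id (hf : Continuous f) : potential f =O[𝓝 0] (id : ℝ → ℝ) := by
  have := (hasDerivAt_potential hf 0).isBigO_sub
  simp only [potential_zero, sub_zero] at this
  exact this

end Potential

namespace AdmissibleNonlinearity

variable {k : ℕ} {f : ℝ → ℝ} {s t : ℝ}

lemma le_mul_deriv_of_one_lt_growthIndex (hf : AdmissibleNonlinearity k f) (hs : 0 < s)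
    (hst : s < t) (hind : 1 < growthIndex f t) : f s ≤ s * deriv f s := by
  rcases le_or_gt (f s) 0 with hneg | hpos
  · exact (hf.lt_mul_deriv s hs hneg).le
  · have := hind.trans (hf.growthIndex_lt s t hs hst hpos)
    rw [growthIndex, one_lt_div hpos] at this
    exact this.le

lemma two_mul_potential_le (hf : AdmissibleNonlinearity k f) (hs : 0 < s) (hst : s < t)
    (hind : 1 < growthIndex f t) : 2 * potential f s ≤ s * f s := by
  set F : ℝ → ℝ := fun x => x * f x - 2 * potential f x
  have hmono : MonotoneOn F (Ioc 0 s) := by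
    refine monotoneOn_of_hasDerivAt_nonneg (convex_Ioc 0 s) (fun x hx =>
      ((hasDerivAt_id' x).mul (hf.differentiableAt x hx.1).hasDerivAt).sub
        ((hasDerivAt_potential hf.continuous x).const_mul 2)) fun x hx => ?_
    have hx' := interior_subset hx
    linarith [hf.le_mul_deriv_of_one_lt_growthIndex hx'.1 (hx'.2.trans_lt hst) hind]
  have hcont : Continuous F :=
    (continuous_id.mul hf.continuous).sub ((continuous_potential hf.continuous).const_mul 2)
  have hlim : Tendsto F (𝓝[>] 0) (𝓝 0) := by
    simpa [F, potential_zero] using (hcont.tendsto 0).mono_left nhdsWithin_le_nhds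
  have hFs : 0 ≤ F s := le_of_monotoneOn_Ioc_of_tendsto hs hmono hlim
  exact sub_nonneg.1 hFs

lemma growthIndex_mul_lt_of_lt (hf : AdmissibleNonlinearity k f) (hs : 0 < s) (hst : s < t)
    (hind : 1 < growthIndex f t) : growthIndex f t * f s < s * deriv f s := by
  rcases le_or_gt (f s) 0 with hneg | hpos
  · nlinarith [hf.lt_mul_deriv s hs hneg]
  · have := hf.growthIndex_lt s t hs hst hpos
    rwa [growthIndex, growthIndex, lt_div_iff₀ hpos] at this

lemma mul_deriv_lt_growthIndex_mul (hf : AdmissibleNonlinearity k f) (hs : 0 < s) (hst : s < t)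
    (hpos : 0 < f s) : t * deriv f t < growthIndex f s * f t := by
  have := hf.growthIndex_lt s t hs hst hpos
  rwa [growthIndex, div_lt_iff₀ (hf.pos_of_nonneg s t hs hst hpos.le)] at this

end AdmissibleNonlinearity

namespace RadialGroundState

variable {k : ℕ} {f w z : ℝ → ℝ} {a r : ℝ}

lemma deriv_nonpos (H : RadialGroundState k f w z) (hr : 0 < r) : z r ≤ 0 := by
  have : derivWithin w (Ioi 0) r ≤ 0 := H.strictAntiOn.antitoneOn.derivWithin_nonpos
  rwa [derivWithin_of_isOpen isOpen_Ioi hr, (H.equation.hasDerivAt r hr).deriv] at this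

lemma hasDerivAt_source (H : RadialGroundState k f w z) (hf : AdmissibleNonlinearity k f)
    (hr : 0 < r) : HasDerivAt (fun r => f (w r)) (deriv f (w r) * z r) r :=
  (hf.differentiableAt _ (H.pos r hr)).hasDerivAt.comp r (H.equation.hasDerivAt r hr)

lemma isBigO_one_comp (H : RadialGroundState k f w z) {g : ℝ → ℝ} (hg : Continuous g) :
    (fun r => g (w r)) =O[𝓝[>] 0] (1 : ℝ → ℝ) := by
  obtain ⟨a, ha⟩ := H.exists_tendsto
  exact ((hg.tendsto a).comp ha).isBigO_one ℝ

lemma isBigO_deriv_id (H : RadialGroundState k f w z) (hf : AdmissibleNonlinearity k f)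
    (hk : 1 ≤ k) : z =O[𝓝[>] 0] (id : ℝ → ℝ) := by
  obtain ⟨a, ha⟩ := H.exists_tendsto
  exact H.equation.isBigO_deriv_id hk ha (H.isBigO_one_comp hf.continuous)

lemma tendsto_deriv_nhdsGT_zero (H : RadialGroundState k f w z) (hf : AdmissibleNonlinearity k f)
    (hk : 1 ≤ k) : Tendsto z (𝓝[>] 0) (𝓝 0) :=
  (H.isBigO_deriv_id hf hk).trans_tendsto tendsto_id_nhdsGT_zero

lemma tendsto_atTop (H : RadialGroundState k f w z) : Tendsto w atTop (𝓝 0) := by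
  simpa using H.tendsto_pow_mul 0

lemma tendsto_deriv_atTop (H : RadialGroundState k f w z) : Tendsto z atTop (𝓝 0) := by
  simpa using H.tendsto_pow_mul_deriv 0

lemma tendsto_pow_mul_comp (H : RadialGroundState k f w z) {g : ℝ → ℝ}
    (hg : g =O[𝓝 0] (id : ℝ → ℝ)) (j : ℕ) : Tendsto (fun r => r ^ j * g (w r)) atTop (𝓝 0) :=
  ((isBigO_refl (fun r : ℝ => r ^ j) atTop).mul
    (hg.comp_tendsto H.tendsto_atTop)).trans_tendsto (H.tendsto_pow_mul j)

lemma exists_abs_deriv_le (H : RadialGroundState k f w z) (hf : AdmissibleNonlinearity k f)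
    (R : ℝ) : ∃ M, ∀ r ∈ Ioc 0 R, |deriv f (w r)| ≤ M := by
  rcases le_or_gt R 0 with hR | hR
  · exact ⟨0, fun r hr => absurd (hr.1.trans_le hr.2) hR.not_gt⟩
  obtain ⟨a, ha⟩ := H.exists_tendsto
  have hcont : ContinuousOn (deriv f) (Icc (w R) a) := fun s hs =>
    (hf.continuousAt_deriv s ((H.pos R hR).trans_le hs.1)).continuousWithinAt
  obtain ⟨M, hM⟩ := isCompact_Icc.exists_bound_of_continuousOn hcont
  refine ⟨M, fun r hr => hM _ ⟨H.strictAntiOn.antitoneOn hr.1 hR hr.2, ?_⟩⟩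
  exact le_of_antitoneOn_Ioc_of_tendsto hr.1
    (H.strictAntiOn.antitoneOn.mono Ioc_subset_Ioi_self) ha

/-! ### The Pohozaev function -/

lemma hasDerivAt_pohozaev (H : RadialGroundState k f w z) (hf : Continuous f) (hr : 0 < r) :
    HasDerivAt (pohozaev k f w z) (r ^ k * pohozaevDensity k f (w r)) r := by
  have hw := H.equation.hasDerivAt r hr
  have hz := H.equation.hasDerivAt_deriv r hr
  have hF := (hasDerivAt_potential hf (w r)).comp r hw
  have hkin := (hasDerivAt_pow_of_ne_zero (k + 1) hr.ne').mul ((hz.pow 2).add (hF.const_mul 2))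
  have hmixed := ((hasDerivAt_pow_of_ne_zero k hr.ne').mul (hw.mul hz)).const_mul ((k : ℝ) - 1)
  refine (hkin.add hmixed).congr_deriv ?_
  simp only [pohozaevDensity, Pi.add_apply, Pi.mul_apply, Pi.pow_apply, Function.comp_apply,
    Nat.cast_add, Nat.cast_one, Nat.cast_ofNat, Nat.add_one_sub_one, pow_one]
  field_simp
  ring

lemma tendsto_pohozaev_nhdsGT_zero (H : RadialGroundState k f w z)
    (hf : AdmissibleNonlinearity k f) (hk : 1 ≤ k) :
    Tendsto (pohozaev k f w z) (𝓝[>] 0) (𝓝 0) := by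
  obtain ⟨a, ha⟩ := H.exists_tendsto
  have hz := H.tendsto_deriv_nhdsGT_zero hf hk
  have hF := ((continuous_potential hf.continuous).tendsto a).comp ha
  have := ((tendsto_pow_nhdsGT_zero (Nat.le_add_left 1 k)).mul
    ((hz.pow 2).add (hF.const_mul 2))).add
    (((tendsto_pow_nhdsGT_zero hk).mul (ha.mul hz)).const_mul ((k : ℝ) - 1))
  simp only [zero_mul, mul_zero, add_zero] at this
  exact this

lemma tendsto_pohozaev_atTop (H : RadialGroundState k f w z) (hf : Continuous f) :
    Tendsto (pohozaev k f w z) atTop (𝓝 0) := by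
  have hkin := ((H.tendsto_pow_mul_deriv (k + 1)).mul H.tendsto_deriv_atTop).add
    ((H.tendsto_pow_mul_comp (potential_isBigO_id hf) (k + 1)).const_mul 2)
  have hmixed := ((H.tendsto_pow_mul k).mul H.tendsto_deriv_atTop).const_mul ((k : ℝ) - 1)
  have := hkin.add hmixed
  simp only [mul_zero, add_zero] at this
  exact this.congr fun r => by unfold pohozaev; ring

-- The density `pohozaevDensity k f (w r)` changes sign at most once, from positive to nonpositive,
-- and the Pohozaev function vanishes at both ends.
lemma pohozaev_nonneg (H : RadialGroundState k f w z) (hf : AdmissibleNonlinearity k f)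
    (hk : 1 ≤ k) (hr : 0 < r) : 0 ≤ pohozaev k f w z r := by
  by_cases hQ : 0 < pohozaevDensity k f (w r)
  · refine le_of_monotoneOn_Ioc_of_tendsto hr (monotoneOn_of_hasDerivAt_nonneg (convex_Ioc 0 r)
      (fun s hs => H.hasDerivAt_pohozaev hf.continuous hs.1) fun s hs => ?_)
      (H.tendsto_pohozaev_nhdsGT_zero hf hk)
    rw [interior_Ioc] at hs
    exact mul_nonneg (pow_pos hs.1 k).le
      (hf.pohozaevDensity_pos _ _ (H.pos r hr) (H.strictAntiOn hs.1 hr hs.2) hQ).le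
  · refine le_of_antitoneOn_Ici_of_tendsto le_rfl (antitoneOn_of_hasDerivAt_nonpos (convex_Ici r)
      (fun s hs => H.hasDerivAt_pohozaev hf.continuous (hr.trans_le hs)) fun s hs => ?_)
      (H.tendsto_pohozaev_atTop hf.continuous)
    rw [interior_Ici] at hs
    have hs0 : 0 < s := hr.trans hs
    exact mul_nonpos_of_nonneg_of_nonpos (pow_pos hs0 k).le <| not_lt.1 fun hQs =>
      hQ (hf.pohozaevDensity_pos _ _ (H.pos s hs0) (H.strictAntiOn hr hs0 hs) hQs)

lemma antitoneOn_mul_deriv_div (H : RadialGroundState k f w z) (hf : AdmissibleNonlinearity k f)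
    (hk : 1 ≤ k) (ha : 0 < a) (hF : ∀ r, a < r → 2 * potential f (w r) ≤ w r * f (w r)) :
    AntitoneOn (fun r => r * z r / w r) (Ici a) := by
  refine antitoneOn_of_hasDerivAt_nonpos (convex_Ici a) (fun r hr =>
    ((hasDerivAt_id' r).mul (H.equation.hasDerivAt_deriv r (ha.trans_le hr))).div
      (H.equation.hasDerivAt r (ha.trans_le hr)) (H.pos r (ha.trans_le hr)).ne') fun r hr => ?_
  rw [interior_Ici] at hr
  have hr0 : 0 < r := ha.trans hr
  have hP : 0 ≤ pohozaev k f w z r / r ^ k :=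
    div_nonneg (H.pohozaev_nonneg hf hk hr0) (pow_pos hr0 k).le
  have hnum : (1 * z r + r * (-(k / r) * z r - f (w r))) * w r - r * z r * z r =
      -(pohozaev k f w z r / r ^ k) + r * (2 * potential f (w r) - w r * f (w r)) := by
    unfold pohozaev
    field_simp
    ring
  refine div_nonpos_of_nonpos_of_nonneg ?_ (sq_nonneg _)
  simp only [Pi.mul_apply]
  rw [hnum]
  nlinarith [hF r hr]

/-! ### The translation mode -/

lemma tendsto_wronskian_deriv_nhdsGT_zero (H : RadialGroundState k f w z)
    (hf : AdmissibleNonlinearity k f) (hk : 1 ≤ k) {φ ψ : ℝ → ℝ}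
    (hφ : φ =O[𝓝[>] 0] (1 : ℝ → ℝ)) (hψ : ψ =O[𝓝[>] 0] (1 : ℝ → ℝ)) :
    Tendsto (wronskian k z (fun r => -(k / r) * z r - f (w r)) φ ψ) (𝓝[>] 0) (𝓝 0) := by
  have hz := (H.tendsto_deriv_nhdsGT_zero hf hk).isBigO_one ℝ
  have hkz : (fun r => -(k / r) * z r) =O[𝓝[>] 0] (1 : ℝ → ℝ) := by
    refine ((isBigO_refl (fun r : ℝ => -(k / r : ℝ)) (𝓝[>] 0)).mul
      (H.isBigO_deriv_id hf hk)).trans (IsBigO.of_bound k ?_)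
    filter_upwards [self_mem_nhdsWithin] with r hr
    simp [div_mul_cancel₀ _ (abs_ne_zero.2 (mem_Ioi.1 hr).ne')]
  exact tendsto_wronskian_nhdsGT_zero hk hz (hkz.sub (H.isBigO_one_comp hf.continuous)) hφ hψ

lemma tendsto_wronskian_deriv_of_le_atTop (H : RadialGroundState k f w z)
    (hf : AdmissibleNonlinearity k f) {φ ψ : ℝ → ℝ} {l : Filter ℝ} (hl : l ≤ atTop)
    (hφ : Tendsto φ l (𝓝 0)) (hψ : Tendsto ψ l (𝓝 0)) :
    Tendsto (wronskian k z (fun r => -(k / r) * z r - f (w r)) φ ψ) l (𝓝 0) := by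
  have hderiv := (((H.tendsto_pow_mul_deriv k).mul tendsto_inv_atTop_zero).const_mul (-k : ℝ)).sub
    (H.tendsto_pow_mul_comp hf.isBigO_id k)
  simp only [mul_zero, sub_zero] at hderiv
  exact tendsto_wronskian_of_tendsto_pow_mul ((H.tendsto_pow_mul_deriv k).mono_left hl)
    ((hderiv.congr fun r => by ring).mono_left hl) hφ hψ

/-! ### Scaling modes -/

lemma radialPoisson_scalingMode (H : RadialGroundState k f w z) (hf : AdmissibleNonlinearity k f)
    (α β : ℝ) :
    RadialPoisson k
      (fun r => (2 * α + β) * f (w r) - β * (w r * deriv f (w r)) +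
        deriv f (w r) * scalingMode α β w z r)
      (scalingMode α β w z) (scalingModeDeriv k f α β w z) := by
  have key := (H.equation.dilation fun r hr => H.hasDerivAt_source hf hr).linearCombination
    H.equation α β
  refine ⟨key.hasDerivAt, fun r hr => (key.hasDerivAt_deriv r hr).congr_deriv ?_⟩
  unfold scalingModeDeriv scalingMode
  ring

lemma tendsto_wronskian_scalingMode_nhdsGT_zero (H : RadialGroundState k f w z)
    (hf : AdmissibleNonlinearity k f) (hk : 1 ≤ k) {φ ψ : ℝ → ℝ}
    (hφ : φ =O[𝓝[>] 0] (1 : ℝ → ℝ)) (hψ : ψ =O[𝓝[>] 0] (1 : ℝ → ℝ)) (α β : ℝ) :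
    Tendsto (wronskian k (scalingMode α β w z) (scalingModeDeriv k f α β w z) φ ψ)
      (𝓝[>] 0) (𝓝 0) := by
  obtain ⟨a, ha⟩ := H.exists_tendsto
  have hz := H.tendsto_deriv_nhdsGT_zero hf hk
  have hfw := (hf.continuous.tendsto a).comp ha
  have hid := tendsto_id_nhdsGT_zero
  refine tendsto_wronskian_nhdsGT_zero hk ?_ ?_ hφ hψ
  · exact (((hid.mul hz).const_mul α).add (ha.const_mul β)).isBigO_one ℝ
  · exact ((((hz.const_mul (1 - k : ℝ)).sub (hid.mul hfw)).const_mul α).add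
      (hz.const_mul β)).isBigO_one ℝ

lemma tendsto_wronskian_scalingMode_of_le_atTop (H : RadialGroundState k f w z)
    (hf : AdmissibleNonlinearity k f) {φ ψ : ℝ → ℝ} {l : Filter ℝ} (hl : l ≤ atTop)
    (hφ : Tendsto φ l (𝓝 0)) (hψ : Tendsto ψ l (𝓝 0)) (α β : ℝ) :
    Tendsto (wronskian k (scalingMode α β w z) (scalingModeDeriv k f α β w z) φ ψ) l (𝓝 0) := by
  have hmode := ((H.tendsto_pow_mul_deriv (k + 1)).const_mul α).add
    ((H.tendsto_pow_mul k).const_mul β)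
  have hderiv := (((H.tendsto_pow_mul_deriv k).const_mul (1 - k : ℝ)).sub
    (H.tendsto_pow_mul_comp hf.isBigO_id (k + 1))).const_mul α |>.add
    ((H.tendsto_pow_mul_deriv k).const_mul β)
  simp only [mul_zero, add_zero, sub_zero] at hmode hderiv
  refine tendsto_wronskian_of_tendsto_pow_mul ((hmode.congr fun r => ?_).mono_left hl)
    ((hderiv.congr fun r => ?_).mono_left hl) hφ hψ
  · unfold scalingMode
    ring
  · unfold scalingModeDeriv
    ring

end RadialGroundState

/-- `φ`, with `ψ = φ'`, is positive on `(0, r)` and crosses zero transversally at `r`. -/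
structure IsFirstZero (φ ψ : ℝ → ℝ) (r : ℝ) : Prop where
  pos : 0 < r
  eq_zero : φ r = 0
  deriv_neg : ψ r < 0
  pos_of_lt : ∀ s ∈ Ioo 0 r, 0 < φ s

namespace LinearizedSolution

variable {k : ℕ} {f w z φ ψ : ℝ → ℝ} {a c r : ℝ}

lemma neg (L : LinearizedSolution k f w φ ψ) : LinearizedSolution k f w (-φ) (-ψ) where
  equation := by
    convert L.equation.neg using 2
    simp
  exists_tendsto := L.exists_tendsto.imp' Neg.neg fun _ ha => ha.neg
  exists_tendsto_zero := by
    obtain ⟨l, hne, hl, hφ, hψ⟩ := L.exists_tendsto_zero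
    exact ⟨l, hne, hl, neg_zero (G := ℝ) ▸ hφ.neg, neg_zero (G := ℝ) ▸ hψ.neg⟩

lemma isBigO_one (L : LinearizedSolution k f w φ ψ) : φ =O[𝓝[>] 0] (1 : ℝ → ℝ) := by
  obtain ⟨a, ha⟩ := L.exists_tendsto
  exact ha.isBigO_one ℝ

lemma tendsto_deriv_nhdsGT_zero (L : LinearizedSolution k f w φ ψ)
    (H : RadialGroundState k f w z) (hf : AdmissibleNonlinearity k f) (hk : 1 ≤ k) :
    Tendsto ψ (𝓝[>] 0) (𝓝 0) := by
  obtain ⟨a, ha⟩ := L.exists_tendsto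
  obtain ⟨M, hM⟩ := H.exists_abs_deriv_le hf 1
  have hbdd : (fun r => deriv f (w r)) =O[𝓝[>] 0] (1 : ℝ → ℝ) := by
    refine IsBigO.of_bound M ?_
    filter_upwards [Ioc_mem_nhdsGT one_pos] with r hr
    simpa using hM r hr
  exact L.equation.tendsto_deriv_nhdsGT_zero hk ha
    ((hbdd.mul L.isBigO_one).congr_right fun _ => mul_one 1)

-- An everywhere positive `φ` would have the constant Wronskian `0` with `z = w'`, the derivative of
-- which is `k r ^ (k - 2) |z| φ`.
lemma exists_nonpos (L : LinearizedSolution k f w φ ψ) (H : RadialGroundState k f w z)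
    (hf : AdmissibleNonlinearity k f) (hk : 1 ≤ k) : ∃ r > 0, φ r ≤ 0 := by
  by_contra! hpos
  obtain ⟨l, _, hl, hφ_l, hψ_l⟩ := L.exists_tendsto_zero
  have hk0 : (0 : ℝ) < k := by exact_mod_cast hk
  set z' : ℝ → ℝ := fun r => -(k / r) * z r - f (w r)
  set W := wronskian k z z' φ ψ
  have hW_deriv : ∀ r, 0 < r → HasDerivAt W (r ^ k * (k / r ^ 2 * (-z r * φ r))) r := fun r hr =>
    ((H.equation.translation fun s hs => H.hasDerivAt_source hf hs).hasDerivAt_wronskian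
      L.equation hr).congr_deriv (by ring)
  have hmono : MonotoneOn W (Ioi 0) := by
    refine monotoneOn_of_hasDerivAt_nonneg (convex_Ioi 0) (fun r hr => hW_deriv r hr) fun r hr => ?_
    have hr0 : 0 < r := interior_subset hr
    have := mul_nonneg (neg_nonneg.2 (H.deriv_nonpos hr0)) (hpos r hr0).le
    positivity
  have hW_zero : Tendsto W (𝓝[>] 0) (𝓝 0) :=
    H.tendsto_wronskian_deriv_nhdsGT_zero hf hk L.isBigO_one
      ((L.tendsto_deriv_nhdsGT_zero H hf hk).isBigO_one ℝ)
  have hW_l : Tendsto W l (𝓝 0) :=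
    H.tendsto_wronskian_deriv_of_le_atTop hf hl hφ_l hψ_l
  have hW_eq : ∀ r, 0 < r → W r = 0 := fun r hr =>
    eq_of_monotoneOn_Ioi_of_tendsto hl hr hmono hW_zero hW_l
  have hz : ∀ r, 0 < r → z r = 0 := fun r hr => by
    have hconst : HasDerivAt W 0 r := (hasDerivAt_const r (0 : ℝ)).congr_of_eventuallyEq (by
      filter_upwards [lt_mem_nhds hr] with s hs using hW_eq s hs)
    simpa [hr.ne', hk0.ne', (hpos r hr).ne'] using (hW_deriv r hr).unique hconst
  have hw : MonotoneOn w (Icc 1 2) :=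
    monotoneOn_of_hasDerivAt_nonneg (convex_Icc 1 2)
      (fun r hr => H.equation.hasDerivAt r (one_pos.trans_le hr.1))
      fun r hr => (hz r (one_pos.trans_le (interior_subset hr).1)).ge
  exact (H.strictAntiOn (mem_Ioi.2 one_pos) (mem_Ioi.2 two_pos) one_lt_two).not_ge
    (hw (by norm_num) (by norm_num) one_le_two)

lemma exists_isFirstZero (L : LinearizedSolution k f w φ ψ) (H : RadialGroundState k f w z)
    (hf : AdmissibleNonlinearity k f) (hk : 1 ≤ k) (hc : Tendsto φ (𝓝[>] 0) (𝓝 c))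
    (hc0 : 0 < c) : ∃ r, IsFirstZero φ ψ r := by
  obtain ⟨b, hb, hφb⟩ := L.exists_nonpos H hf hk
  obtain ⟨r, hr, hφr, hpos⟩ := exists_least_zero
    (fun s hs => (L.equation.hasDerivAt s hs).continuousAt.continuousWithinAt)
    (hc.eventually_const_lt hc0) hb hφb
  refine ⟨r, hr, hφr, ?_, hpos⟩
  refine (deriv_nonpos_of_pos_left (L.equation.hasDerivAt r hr) hφr hr hpos).lt_of_ne fun hψr => ?_
  have hmid : r / 2 ∈ Ioo 0 r := ⟨half_pos hr, half_lt_self hr⟩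
  exact (hpos _ hmid).ne'
    (L.equation.eq_zero_of_eq_zero (H.exists_abs_deriv_le hf) hr hφr hψr hmid.1)

-- Past a zero of `φ` at which `f(w) ≤ 0`, the nonpositive mode `r w'` is a strict subsolution.
lemma source_pos_of_isFirstZero (L : LinearizedSolution k f w φ ψ) (H : RadialGroundState k f w z)
    (hf : AdmissibleNonlinearity k f) (hr : IsFirstZero φ ψ r) : 0 < f (w r) := by
  by_contra! hneg
  obtain ⟨l, _, hl, hφ_l, hψ_l⟩ := L.exists_tendsto_zero
  refine (H.radialPoisson_scalingMode hf 1 0).not_tendsto_wronskian hl L.equation hr.pos hr.eq_zero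
    hr.deriv_neg (fun s hs => ?_) (fun s hs => ?_)
    (H.tendsto_wronskian_scalingMode_of_le_atTop hf hl hφ_l hψ_l 1 0)
  · have hs0 := hr.pos.trans_le hs
    simpa [scalingMode] using mul_nonpos_of_nonneg_of_nonpos hs0.le (H.deriv_nonpos hs0)
  · have hs0 := hr.pos.trans hs
    have hfs : f (w s) < 0 := not_le.1 fun hnonneg => hneg.not_gt <|
      hf.pos_of_nonneg _ _ (H.pos s hs0) (H.strictAntiOn hr.pos hs0 hs) hnonneg
    linarith

lemma scalingMode_nonpos_of_isFirstZero (L : LinearizedSolution k f w φ ψ)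
    (H : RadialGroundState k f w z) (hf : AdmissibleNonlinearity k f) (hk : 1 ≤ k)
    (hr : IsFirstZero φ ψ r) : scalingMode (growthIndex f (w r) - 1) 2 w z r ≤ 0 := by
  set α := growthIndex f (w r) - 1 with hα
  have hmono : MonotoneOn (wronskian k (scalingMode α 2 w z) (scalingModeDeriv k f α 2 w z) φ ψ)
      (Ioc 0 r) := by
    refine monotoneOn_of_hasDerivAt_nonneg (convex_Ioc 0 r) (fun s hs =>
      (H.radialPoisson_scalingMode hf α 2).hasDerivAt_wronskian L.equation hs.1) fun s hs => ?_
    rw [interior_Ioc] at hs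
    have hlt := hf.mul_deriv_lt_growthIndex_mul (H.pos r hr.pos)
      (H.strictAntiOn hs.1 hr.pos hs.2) (L.source_pos_of_isFirstZero H hf hr)
    have hgain : 0 < 2 * (growthIndex f (w r) * f (w s) - w s * deriv f (w s)) * φ s :=
      mul_pos (by linarith) (hr.pos_of_lt s hs)
    refine mul_nonneg (pow_pos hs.1 k).le (hgain.le.trans_eq ?_)
    rw [hα]
    ring
  have hW := le_of_monotoneOn_Ioc_of_tendsto hr.pos hmono
    (H.tendsto_wronskian_scalingMode_nhdsGT_zero hf hk L.isBigO_one
      ((L.tendsto_deriv_nhdsGT_zero H hf hk).isBigO_one ℝ) α 2)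
  rw [wronskian, hr.eq_zero, zero_mul, sub_zero] at hW
  exact nonpos_of_mul_nonneg_left (nonneg_of_mul_nonneg_right hW (pow_pos hr.pos k)) hr.deriv_neg

lemma one_lt_growthIndex_of_isFirstZero (L : LinearizedSolution k f w φ ψ)
    (H : RadialGroundState k f w z) (hf : AdmissibleNonlinearity k f) (hk : 1 ≤ k)
    (hr : IsFirstZero φ ψ r) : 1 < growthIndex f (w r) := by
  by_contra! hle
  have hdil : r * z r ≤ 0 := mul_nonpos_of_nonneg_of_nonpos hr.pos.le (H.deriv_nonpos hr.pos)
  have := L.scalingMode_nonpos_of_isFirstZero H hf hk hr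
  unfold scalingMode at this
  nlinarith [H.pos r hr.pos]

lemma scalingMode_nonpos_of_isFirstZero_of_le (L : LinearizedSolution k f w φ ψ)
    (H : RadialGroundState k f w z) (hf : AdmissibleNonlinearity k f) (hk : 1 ≤ k)
    (hr : IsFirstZero φ ψ r) {s : ℝ} (hs : r ≤ s) :
    scalingMode (growthIndex f (w r) - 1) 2 w z s ≤ 0 := by
  have hind := L.one_lt_growthIndex_of_isFirstZero H hf hk hr
  have hfactor : ∀ t, r ≤ t → scalingMode (growthIndex f (w r) - 1) 2 w z t =
      w t * ((growthIndex f (w r) - 1) * (t * z t / w t) + 2) := fun t ht => by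
    have := (H.pos t (hr.pos.trans_le ht)).ne'
    unfold scalingMode
    field_simp
  have hanti := H.antitoneOn_mul_deriv_div hf hk hr.pos fun t ht =>
    hf.two_mul_potential_le (H.pos t (hr.pos.trans ht))
      (H.strictAntiOn hr.pos (hr.pos.trans ht) ht) hind
  have hr_nonpos := L.scalingMode_nonpos_of_isFirstZero H hf hk hr
  rw [hfactor r le_rfl] at hr_nonpos
  rw [hfactor s hs]
  refine mul_nonpos_of_nonneg_of_nonpos (H.pos s (hr.pos.trans_le hs)).le ?_
  refine le_trans ?_ (nonpos_of_mul_nonpos_right hr_nonpos (H.pos r hr.pos))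
  have hquot : s * z s / w s ≤ r * z r / w r := hanti self_mem_Ici hs hs
  have := mul_le_mul_of_nonneg_left hquot (sub_pos.2 hind).le
  linarith

lemma not_isFirstZero (L : LinearizedSolution k f w φ ψ) (H : RadialGroundState k f w z)
    (hf : AdmissibleNonlinearity k f) (hk : 1 ≤ k) : ¬ IsFirstZero φ ψ r := by
  intro hr
  obtain ⟨l, _, hl, hφ_l, hψ_l⟩ := L.exists_tendsto_zero
  refine (H.radialPoisson_scalingMode hf (growthIndex f (w r) - 1) 2).not_tendsto_wronskian hl
    L.equation hr.pos hr.eq_zero hr.deriv_neg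
    (fun s hs => L.scalingMode_nonpos_of_isFirstZero_of_le H hf hk hr hs) (fun s hs => ?_)
    (H.tendsto_wronskian_scalingMode_of_le_atTop hf hl hφ_l hψ_l _ 2)
  have hs0 := hr.pos.trans hs
  have := hf.growthIndex_mul_lt_of_lt (H.pos s hs0) (H.strictAntiOn hr.pos hs0 hs)
    (L.one_lt_growthIndex_of_isFirstZero H hf hk hr)
  linarith

lemma nonpos_of_tendsto (L : LinearizedSolution k f w φ ψ) (H : RadialGroundState k f w z)
    (hf : AdmissibleNonlinearity k f) (hk : 1 ≤ k) (hc : Tendsto φ (𝓝[>] 0) (𝓝 c)) : c ≤ 0 :=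
  not_lt.1 fun hc0 =>
    have ⟨_, hr⟩ := L.exists_isFirstZero H hf hk hc hc0
    L.not_isFirstZero H hf hk hr

theorem eq_zero (L : LinearizedSolution k f w φ ψ) (H : RadialGroundState k f w z)
    (hf : AdmissibleNonlinearity k f) (hk : 1 ≤ k) (hr : 0 < r) : φ r = 0 := by
  obtain ⟨c, hc⟩ := L.exists_tendsto
  have hc0 : c = 0 := le_antisymm (L.nonpos_of_tendsto H hf hk hc)
    (neg_nonpos.1 (L.neg.nonpos_of_tendsto H hf hk hc.neg))
  exact L.equation.eq_zero_of_tendsto_nhdsGT_zero (H.exists_abs_deriv_le hf) (hc0 ▸ hc)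
    (L.tendsto_deriv_nhdsGT_zero H hf hk) hr

end LinearizedSolution

/-! ### The dual variable -/

/-- The weight `√(1 + 2y²)`, for which the principal part of (QLS) is `-q(u) ∇ · (q(u) ∇u)`. -/
def dualWeight (y : ℝ) : ℝ :=
  √(1 + 2 * y ^ 2)

/-- The change of unknown `w = S(u)`, with `S' = dualWeight`, which turns (QLS) into a semilinear
equation. -/
def dualMap (y : ℝ) : ℝ :=
  ∫ t in (0 : ℝ)..y, dualWeight t

/-- The ratio of `dualMap y` to its crude bound `y * dualWeight y`. -/
def dualRatio (y : ℝ) : ℝ :=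
  dualMap y / (dualWeight y * y)

lemma dualWeight_sq (y : ℝ) : dualWeight y ^ 2 = 1 + 2 * y ^ 2 :=
  sq_sqrt (by positivity)

lemma dualWeight_pos (y : ℝ) : 0 < dualWeight y :=
  sqrt_pos.2 (by positivity)

lemma one_le_dualWeight (y : ℝ) : 1 ≤ dualWeight y :=
  one_le_sqrt.2 (by nlinarith [sq_nonneg y])

lemma continuous_dualWeight : Continuous dualWeight := by
  unfold dualWeight
  fun_prop

lemma hasDerivAt_dualWeight (y : ℝ) : HasDerivAt dualWeight (2 * y / dualWeight y) y := by
  have hinner : HasDerivAt (fun y : ℝ => 1 + 2 * y ^ 2) (2 * (2 * y)) y := by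
    simpa using ((hasDerivAt_pow 2 y).const_mul 2).const_add 1
  refine (hinner.sqrt (by positivity)).congr_deriv ?_
  unfold dualWeight
  field_simp

lemma dualMap_zero : dualMap 0 = 0 :=
  intervalIntegral.integral_same

lemma hasDerivAt_dualMap (y : ℝ) : HasDerivAt dualMap (dualWeight y) y :=
  (continuous_dualWeight.integral_hasStrictDerivAt 0 y).hasDerivAt

lemma continuous_dualMap : Continuous dualMap :=
  continuous_iff_continuousAt.2 fun y => (hasDerivAt_dualMap y).continuousAt

lemma strictMono_dualMap : StrictMono dualMap :=
  strictMono_of_hasDerivAt_pos hasDerivAt_dualMap dualWeight_pos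

lemma dualMap_pos {y : ℝ} (hy : 0 < y) : 0 < dualMap y :=
  dualMap_zero ▸ strictMono_dualMap hy

lemma surjective_dualMap : Function.Surjective dualMap := by
  have hmono : Monotone fun y => dualMap y - y :=
    monotone_of_hasDerivAt_nonneg (fun y => (hasDerivAt_dualMap y).sub (hasDerivAt_id' y))
      fun y => sub_nonneg.2 (one_le_dualWeight y)
  refine continuous_dualMap.surjective (tendsto_atTop_mono' _ ?_ tendsto_id)
    (tendsto_atBot_mono' _ ?_ tendsto_id)
  · filter_upwards [eventually_ge_atTop 0] with y hy
    simpa [dualMap_zero] using hmono hy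
  · filter_upwards [eventually_le_atBot 0] with y hy
    simpa [dualMap_zero] using hmono hy

/-- `dualMap` as an order isomorphism of the real line. -/
def dualIso : ℝ ≃o ℝ :=
  strictMono_dualMap.orderIsoOfSurjective dualMap surjective_dualMap

lemma dualIso_symm_dualMap (y : ℝ) : dualIso.symm (dualMap y) = y :=
  dualIso.symm_apply_apply y

lemma exists_pos_dualMap_eq {s : ℝ} (hs : 0 < s) : ∃ y, 0 < y ∧ dualMap y = s := by
  obtain ⟨y, rfl⟩ := surjective_dualMap s
  exact ⟨y, strictMono_dualMap.lt_iff_lt.1 (dualMap_zero.trans_lt hs), rfl⟩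

lemma hasDerivAt_dualIso_symm (y : ℝ) :
    HasDerivAt dualIso.symm (dualWeight y)⁻¹ (dualMap y) := by
  refine HasDerivAt.of_local_left_inverse (f := dualMap) dualIso.symm.continuous.continuousAt ?_
    (dualWeight_pos y).ne' (Eventually.of_forall dualIso.apply_symm_apply)
  rw [dualIso_symm_dualMap]
  exact hasDerivAt_dualMap y

lemma dualIso_symm_isBigO_id : dualIso.symm =O[𝓝 0] (id : ℝ → ℝ) := by
  have := (hasDerivAt_dualIso_symm 0).isBigO_sub
  rw [dualIso_symm_dualMap, dualMap_zero] at this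
  simp only [sub_zero] at this
  exact this

lemma dualMap_isBigO_id : dualMap =O[𝓝 0] (id : ℝ → ℝ) := by
  have := (hasDerivAt_dualMap 0).isBigO_sub
  rw [dualMap_zero] at this
  simp only [sub_zero] at this
  exact this

lemma tendsto_pow_mul_dualMap {U : ℝ → ℝ} (hU : Tendsto U atTop (𝓝 0)) {j : ℕ}
    (hdecay : Tendsto (fun r => r ^ j * U r) atTop (𝓝 0)) :
    Tendsto (fun r => r ^ j * dualMap (U r)) atTop (𝓝 0) :=
  ((isBigO_refl (fun r : ℝ => r ^ j) atTop).mul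
    (dualMap_isBigO_id.comp_tendsto hU)).trans_tendsto hdecay

lemma tendsto_dualWeight_comp {U : ℝ → ℝ} {a : ℝ} {l : Filter ℝ} (hU : Tendsto U l (𝓝 a)) :
    Tendsto (fun r => dualWeight (U r)) l (𝓝 (dualWeight a)) :=
  (continuous_dualWeight.tendsto a).comp hU

lemma dualRatio_eq_integral {y : ℝ} (hy : y ≠ 0) :
    dualRatio y = ∫ t in (0 : ℝ)..1, dualWeight (t * y) / dualWeight y := by
  rw [intervalIntegral.integral_div, intervalIntegral.integral_comp_mul_right _ hy]
  simp only [zero_mul, one_mul, smul_eq_mul, dualRatio, dualMap]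
  field_simp

lemma continuous_dualWeight_mul_div (y : ℝ) :
    Continuous fun t => dualWeight (t * y) / dualWeight y :=
  (continuous_dualWeight.comp (continuous_mul_const y)).div_const _

lemma dualRatio_pos {y : ℝ} (hy : 0 < y) : 0 < dualRatio y :=
  div_pos (dualMap_pos hy) (mul_pos (dualWeight_pos y) hy)

lemma dualMap_eq_dualRatio_mul {y : ℝ} (hy : 0 < y) :
    dualMap y = dualRatio y * (dualWeight y * y) :=
  (div_mul_cancel₀ _ (mul_pos (dualWeight_pos y) hy).ne').symm

lemma antitoneOn_dualRatio : AntitoneOn dualRatio (Ioi 0) := by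
  intro x (hx : 0 < x) y (hy : 0 < y) hxy
  rw [dualRatio_eq_integral hx.ne', dualRatio_eq_integral hy.ne']
  refine intervalIntegral.integral_mono_on zero_le_one
    ((continuous_dualWeight_mul_div y).intervalIntegrable _ _)
    ((continuous_dualWeight_mul_div x).intervalIntegrable _ _) fun t ht => ?_
  rw [div_le_div_iff₀ (dualWeight_pos y) (dualWeight_pos x)]
  unfold dualWeight
  rw [← sqrt_mul (by positivity), ← sqrt_mul (by positivity)]
  refine sqrt_le_sqrt ?_
  have ht2 : t ^ 2 ≤ 1 := pow_le_one₀ ht.1 ht.2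
  have hxy2 : x ^ 2 ≤ y ^ 2 := pow_le_pow_left₀ hx.le hxy 2
  nlinarith [mul_nonneg (sub_nonneg.2 ht2) (sub_nonneg.2 hxy2)]

lemma dualRatio_le_one {y : ℝ} (hy : 0 < y) : dualRatio y ≤ 1 := by
  rw [dualRatio_eq_integral hy.ne']
  have hle : ∫ t in (0 : ℝ)..1, dualWeight (t * y) / dualWeight y ≤ ∫ _ in (0 : ℝ)..1, (1 : ℝ) := by
    refine intervalIntegral.integral_mono_on zero_le_one
      ((continuous_dualWeight_mul_div y).intervalIntegrable _ _)
      intervalIntegrable_const fun t ht => ?_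
    rw [div_le_one (dualWeight_pos y)]
    refine sqrt_le_sqrt ?_
    have : (t * y) ^ 2 ≤ y ^ 2 :=
      pow_le_pow_left₀ (mul_nonneg ht.1 hy.le) (mul_le_of_le_one_left hy.le ht.2) 2
    linarith
  simpa using hle

/-! ### The dual nonlinearity -/

/-- The nonlinearity of the semilinear equation dual to (QLS), in terms of the original unknown
`y`. -/
def dualSource (ω p y : ℝ) : ℝ :=
  y * (y ^ (p - 1) - ω) / dualWeight y

/-- The derivative of `dualNonlinearity ω p` at `dualMap y`, for `y > 0`. -/
def dualSlope (ω p y : ℝ) : ℝ :=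
  ((p - 1) * y ^ (p - 1) + (y ^ (p - 1) - ω) / dualWeight y ^ 2) / dualWeight y ^ 2

/-- The primitive of `dualNonlinearity ω p` at `dualMap y`, for `y ≥ 0`. -/
def dualEnergy (ω p y : ℝ) : ℝ :=
  y ^ 2 * (y ^ (p - 1) / (p + 1) - ω / 2)

/-- The nonlinearity `f` of the semilinear equation `-Δw = f(w)` satisfied by `w = dualMap ∘ u`
when `u` solves (QLS). -/
def dualNonlinearity (ω p s : ℝ) : ℝ :=
  dualSource ω p (dualIso.symm s)

section DualSource

variable {ω p x y : ℝ}

lemma continuous_rpow_sub_one (hp : 1 < p) : Continuous fun y : ℝ => y ^ (p - 1) :=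
  continuous_rpow_const (sub_pos.2 hp).le

lemma continuous_dualSource (hp : 1 < p) : Continuous (dualSource ω p) :=
  (continuous_id.mul ((continuous_rpow_sub_one hp).sub continuous_const)).div
    continuous_dualWeight fun y => (dualWeight_pos y).ne'

lemma continuous_dualEnergy (hp : 1 < p) : Continuous (dualEnergy ω p) :=
  (continuous_pow 2).mul (((continuous_rpow_sub_one hp).div_const _).sub continuous_const)

lemma continuous_dualSlope (hp : 1 < p) : Continuous (dualSlope ω p) := by
  have hpow := continuous_rpow_sub_one hp
  have hq : Continuous fun y => dualWeight y ^ 2 := continuous_dualWeight.pow 2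
  have hq0 : ∀ y, dualWeight y ^ 2 ≠ 0 := fun y => (pow_pos (dualWeight_pos y) 2).ne'
  exact ((hpow.const_mul (p - 1)).add ((hpow.sub continuous_const).div hq hq0)).div hq hq0

lemma hasDerivAt_rpow_sub_one (hy : 0 < y) :
    HasDerivAt (fun y : ℝ => y ^ (p - 1)) ((p - 1) * y ^ (p - 1) / y) y := by
  refine (hasDerivAt_rpow_const (p := p - 1) (Or.inl hy.ne')).congr_deriv ?_
  rw [rpow_sub_one hy.ne' (p - 1), mul_div_assoc]

lemma hasDerivAt_dualSource (hy : 0 < y) :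
    HasDerivAt (dualSource ω p) (dualWeight y * dualSlope ω p y) y := by
  have hq := dualWeight_pos y
  refine (((hasDerivAt_id' y).mul ((hasDerivAt_rpow_sub_one (p := p) hy).sub_const ω)).div
    (hasDerivAt_dualWeight y) hq.ne').congr_deriv ?_
  have hy2 : y ^ 2 = (dualWeight y ^ 2 - 1) / 2 := by
    rw [dualWeight_sq]
    ring
  simp only [dualSlope, Pi.mul_apply]
  field_simp
  rw [hy2]
  ring

lemma hasDerivAt_dualEnergy (hp : 1 < p) (hy : 0 < y) :
    HasDerivAt (dualEnergy ω p) (dualSource ω p y * dualWeight y) y := by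
  have hq := dualWeight_pos y
  have hp1 : p + 1 ≠ 0 := by linarith
  refine ((hasDerivAt_pow 2 y).mul
    (((hasDerivAt_rpow_sub_one (p := p) hy).div_const (p + 1)).sub_const (ω / 2))).congr_deriv ?_
  simp only [dualSource, Nat.cast_ofNat, Nat.add_one_sub_one, pow_one]
  field_simp
  ring

lemma dualSource_pos_iff (hy : 0 < y) : 0 < dualSource ω p y ↔ ω < y ^ (p - 1) := by
  rw [dualSource, div_pos_iff_of_pos_right (dualWeight_pos y), mul_pos_iff_of_pos_left hy, sub_pos]

lemma rpow_sub_one_lt (hp : 1 < p) (hx : 0 < x) (hxy : x < y) : x ^ (p - 1) < y ^ (p - 1) :=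
  rpow_lt_rpow hx.le hxy (sub_pos.2 hp)

lemma dualSource_pos_of_nonneg (hp : 1 < p) (hx : 0 < x) (hxy : x < y)
    (hsource : 0 ≤ dualSource ω p x) : 0 < dualSource ω p y := by
  rw [dualSource, le_div_iff₀ (dualWeight_pos x), zero_mul, mul_nonneg_iff_of_pos_left hx,
    sub_nonneg] at hsource
  exact (dualSource_pos_iff (hx.trans hxy)).2 (hsource.trans_lt (rpow_sub_one_lt hp hx hxy))

lemma dualMap_mul_dualSlope (hy : 0 < y) :
    dualMap y * dualSlope ω p y = y / dualWeight y *
      (dualRatio y * ((p - 1) * y ^ (p - 1) + (y ^ (p - 1) - ω) / dualWeight y ^ 2)) := by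
  have hq := dualWeight_pos y
  rw [dualMap_eq_dualRatio_mul hy, dualSlope]
  field_simp

lemma dualSource_lt_dualMap_mul_dualSlope (hp : 1 < p) (hy : 0 < y)
    (hsource : dualSource ω p y ≤ 0) : dualSource ω p y < dualMap y * dualSlope ω p y := by
  have hq := dualWeight_pos y
  have hm := dualRatio_pos hy
  have hdamp : dualRatio y / dualWeight y ^ 2 ≤ 1 :=
    (div_le_one (by positivity)).2
      ((dualRatio_le_one hy).trans (one_le_pow₀ (one_le_dualWeight y)))
  have hneg : y ^ (p - 1) - ω ≤ 0 :=
    sub_nonpos.2 (not_lt.1 fun h => hsource.not_gt ((dualSource_pos_iff hy).2 h))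
  have hgain : 0 < dualRatio y * ((p - 1) * y ^ (p - 1)) :=
    mul_pos hm (mul_pos (sub_pos.2 hp) (rpow_pos_of_pos hy _))
  calc dualSource ω p y = y / dualWeight y * (y ^ (p - 1) - ω) := by
        unfold dualSource
        ring
    _ < y / dualWeight y * (dualRatio y * ((p - 1) * y ^ (p - 1)) +
          dualRatio y / dualWeight y ^ 2 * (y ^ (p - 1) - ω)) := by
        refine mul_lt_mul_of_pos_left ?_ (div_pos hy hq)
        nlinarith
    _ = dualMap y * dualSlope ω p y := by
        rw [dualMap_mul_dualSlope hy]
        ring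

lemma dualMap_mul_dualSlope_div_dualSource (hy : 0 < y) (hsource : ω < y ^ (p - 1)) :
    dualMap y * dualSlope ω p y / dualSource ω p y = dualRatio y *
      (1 / dualWeight y ^ 2 + (p - 1) + (p - 1) * ω / (y ^ (p - 1) - ω)) := by
  have hq := dualWeight_pos y
  have hne : y ^ (p - 1) - ω ≠ 0 := (sub_pos.2 hsource).ne'
  rw [dualMap_mul_dualSlope hy, dualSource]
  field_simp
  ring

lemma dualMap_mul_dualSlope_div_dualSource_lt (hω : 0 < ω) (hp : 1 < p) (hx : 0 < x)
    (hxy : x < y) (hsource : 0 < dualSource ω p x) :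
    dualMap y * dualSlope ω p y / dualSource ω p y <
      dualMap x * dualSlope ω p x / dualSource ω p x := by
  have hy := hx.trans hxy
  rw [dualSource_pos_iff hx] at hsource
  have hpow := rpow_sub_one_lt hp hx hxy
  rw [dualMap_mul_dualSlope_div_dualSource hx hsource,
    dualMap_mul_dualSlope_div_dualSource hy (hsource.trans hpow)]
  have hpω : 0 < (p - 1) * ω := mul_pos (sub_pos.2 hp) hω
  have hweight : 1 / dualWeight y ^ 2 ≤ 1 / dualWeight x ^ 2 := by
    rw [dualWeight_sq, dualWeight_sq]
    gcongr
  have hpole : (p - 1) * ω / (y ^ (p - 1) - ω) < (p - 1) * ω / (x ^ (p - 1) - ω) :=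
    div_lt_div_of_pos_left hpω (sub_pos.2 hsource) (by linarith)
  have hpole_pos : 0 < (p - 1) * ω / (y ^ (p - 1) - ω) :=
    div_pos hpω (sub_pos.2 (hsource.trans hpow))
  have hweight_pos : 0 < 1 / dualWeight y ^ 2 := one_div_pos.2 (pow_pos (dualWeight_pos y) 2)
  exact mul_lt_mul' (antitoneOn_dualRatio hx hy hxy.le) (by linarith) (by linarith)
    (dualRatio_pos hx)

lemma dualEnergy_sub_dualMap_mul_dualSource {n : ℝ} (hp : 1 < p) (hy : 0 < y) :
    2 * (n + 1) * dualEnergy ω p y - (n - 1) * (dualMap y * dualSource ω p y) =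
      y ^ 2 * (y ^ (p - 1) * (2 * (n + 1) / (p + 1) - (n - 1) * dualRatio y) -
        ω * ((n + 1) - (n - 1) * dualRatio y)) := by
  have hq := dualWeight_pos y
  have hp1 : p + 1 ≠ 0 := by linarith
  rw [dualEnergy, dualSource, dualMap_eq_dualRatio_mul hy]
  field_simp
  ring

lemma pohozaev_bracket_pos {a b c d X Y : ℝ} (hω : 0 < ω) (ha : 0 < a) (hab : a < b)
    (hcd : c < d) (hYX : Y ≤ X) (hXd : X < d) (h : 0 < a * (c - X) - ω * (d - X)) :
    0 < b * (c - Y) - ω * (d - Y) := by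
  have hcX : 0 < c - X := by
    have : 0 < ω * (d - X) := mul_pos hω (sub_pos.2 hXd)
    exact pos_of_mul_pos_right (by linarith : 0 < a * (c - X)) ha.le
  have hωa : ω < a := by
    have : ω * (c - X) < ω * (d - X) := by gcongr
    exact lt_of_mul_lt_mul_right (by linarith : ω * (c - X) < a * (c - X)) hcX.le
  nlinarith [mul_nonneg (sub_nonneg.2 hYX) (sub_nonneg.2 hωa.le),
    mul_pos (sub_pos.2 hab) (by linarith : 0 < c - Y)]

lemma dualEnergy_sub_dualMap_mul_dualSource_pos {n : ℝ} (hn : 1 ≤ n) (hω : 0 < ω) (hp : 1 < p)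
    (hx : 0 < x) (hxy : x < y)
    (h : 0 < 2 * (n + 1) * dualEnergy ω p x - (n - 1) * (dualMap x * dualSource ω p x)) :
    0 < 2 * (n + 1) * dualEnergy ω p y - (n - 1) * (dualMap y * dualSource ω p y) := by
  have hy := hx.trans hxy
  rw [dualEnergy_sub_dualMap_mul_dualSource hp hx] at h
  rw [dualEnergy_sub_dualMap_mul_dualSource hp hy]
  refine mul_pos (pow_pos hy 2) (pohozaev_bracket_pos hω (rpow_pos_of_pos hx _)
    (rpow_sub_one_lt hp hx hxy) ?_
    (mul_le_mul_of_nonneg_left (antitoneOn_dualRatio hx hy hxy.le) (sub_nonneg.2 hn)) ?_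
    (pos_of_mul_pos_right h (sq_nonneg x)))
  · rw [div_lt_iff₀ (by linarith)]
    nlinarith
  · nlinarith [dualRatio_le_one hx]

end DualSource

section DualNonlinearity

variable {ω p y : ℝ}

lemma dualNonlinearity_dualMap (y : ℝ) :
    dualNonlinearity ω p (dualMap y) = dualSource ω p y := by
  rw [dualNonlinearity, dualIso_symm_dualMap]

lemma continuous_dualNonlinearity (hp : 1 < p) : Continuous (dualNonlinearity ω p) :=
  (continuous_dualSource hp).comp dualIso.symm.continuous

lemma hasDerivAt_dualNonlinearity (hy : 0 < y) :
    HasDerivAt (dualNonlinearity ω p) (dualSlope ω p y) (dualMap y) := by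
  have hsource := hasDerivAt_dualSource (ω := ω) (p := p) hy
  rw [← dualIso_symm_dualMap y] at hsource
  refine (hsource.comp _ (hasDerivAt_dualIso_symm y)).congr_deriv ?_
  have hq := dualWeight_pos y
  rw [dualIso_symm_dualMap]
  field_simp

lemma deriv_dualNonlinearity_dualMap (hy : 0 < y) :
    deriv (dualNonlinearity ω p) (dualMap y) = dualSlope ω p y :=
  (hasDerivAt_dualNonlinearity hy).deriv

lemma continuousAt_deriv_dualNonlinearity (hp : 1 < p) (hy : 0 < y) :
    ContinuousAt (deriv (dualNonlinearity ω p)) (dualMap y) := by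
  have heq : deriv (dualNonlinearity ω p) =ᶠ[𝓝 (dualMap y)]
      fun s => dualSlope ω p (dualIso.symm s) := by
    filter_upwards [lt_mem_nhds (dualMap_pos hy)] with s hs
    obtain ⟨x, hx, rfl⟩ := exists_pos_dualMap_eq hs
    rw [deriv_dualNonlinearity_dualMap hx, dualIso_symm_dualMap]
  exact ((continuous_dualSlope hp).comp dualIso.symm.continuous).continuousAt.congr heq.symm

lemma dualNonlinearity_isBigO_id (hp : 1 < p) :
    dualNonlinearity ω p =O[𝓝 0] (id : ℝ → ℝ) := by
  have hfactor : Continuous fun y => (y ^ (p - 1) - ω) / dualWeight y :=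
    ((continuous_rpow_sub_one hp).sub continuous_const).div continuous_dualWeight
      fun y => (dualWeight_pos y).ne'
  have hbdd := ((hfactor.comp dualIso.symm.continuous).tendsto 0).isBigO_one ℝ
  refine (dualIso_symm_isBigO_id.mul hbdd).congr (fun s => ?_) fun s => mul_one s
  exact (mul_div_assoc _ _ _).symm

lemma potential_dualNonlinearity_dualMap (hp : 1 < p) (hy : 0 ≤ y) :
    potential (dualNonlinearity ω p) (dualMap y) = dualEnergy ω p y := by
  have hsubst := intervalIntegral.integral_comp_mul_deriv (a := 0) (b := y)
    (fun x _ => hasDerivAt_dualMap x) continuous_dualWeight.continuousOn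
    (continuous_dualNonlinearity (ω := ω) hp)
  simp only [Function.comp_apply, dualNonlinearity_dualMap, dualMap_zero] at hsubst
  rw [potential, ← hsubst, intervalIntegral.integral_eq_sub_of_hasDerivAt_of_le hy
    (continuous_dualEnergy hp).continuousOn (fun x hx => hasDerivAt_dualEnergy hp hx.1)
    (((continuous_dualSource hp).mul continuous_dualWeight).intervalIntegrable 0 y)]
  simp [dualEnergy]

lemma growthIndex_dualNonlinearity_dualMap (hy : 0 < y) :
    growthIndex (dualNonlinearity ω p) (dualMap y) =
      dualMap y * dualSlope ω p y / dualSource ω p y := by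
  rw [growthIndex, deriv_dualNonlinearity_dualMap hy, dualNonlinearity_dualMap]

lemma pohozaevDensity_dualNonlinearity_dualMap (k : ℕ) (hp : 1 < p) (hy : 0 < y) :
    pohozaevDensity k (dualNonlinearity ω p) (dualMap y) =
      2 * (k + 1) * dualEnergy ω p y - (k - 1) * (dualMap y * dualSource ω p y) := by
  rw [pohozaevDensity, potential_dualNonlinearity_dualMap hp hy.le, dualNonlinearity_dualMap]

lemma forall_pos_lt_of_dualMap {P : ℝ → ℝ → Prop}
    (h : ∀ x y, 0 < x → x < y → P (dualMap x) (dualMap y)) (s t : ℝ) (hs : 0 < s) (hst : s < t) :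
    P s t := by
  obtain ⟨x, hx, rfl⟩ := exists_pos_dualMap_eq hs
  obtain ⟨y, rfl⟩ := surjective_dualMap t
  exact h x y hx (strictMono_dualMap.lt_iff_lt.1 hst)

theorem admissibleNonlinearity_dualNonlinearity {k : ℕ} (hk : 1 ≤ k) (hω : 0 < ω) (hp : 1 < p) :
    AdmissibleNonlinearity k (dualNonlinearity ω p) where
  continuous := continuous_dualNonlinearity hp
  isBigO_id := dualNonlinearity_isBigO_id hp
  differentiableAt s hs := by
    obtain ⟨y, hy, rfl⟩ := exists_pos_dualMap_eq hs
    exact (hasDerivAt_dualNonlinearity hy).differentiableAt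
  continuousAt_deriv s hs := by
    obtain ⟨y, hy, rfl⟩ := exists_pos_dualMap_eq hs
    exact continuousAt_deriv_dualNonlinearity hp hy
  pos_of_nonneg := forall_pos_lt_of_dualMap fun x y hx hxy h => by
    rw [dualNonlinearity_dualMap] at h ⊢
    exact dualSource_pos_of_nonneg hp hx hxy h
  lt_mul_deriv s hs h := by
    obtain ⟨y, hy, rfl⟩ := exists_pos_dualMap_eq hs
    rw [dualNonlinearity_dualMap] at h ⊢
    rw [deriv_dualNonlinearity_dualMap hy]
    exact dualSource_lt_dualMap_mul_dualSlope hp hy h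
  growthIndex_lt := forall_pos_lt_of_dualMap fun x y hx hxy h => by
    rw [dualNonlinearity_dualMap] at h
    rw [growthIndex_dualNonlinearity_dualMap hx,
      growthIndex_dualNonlinearity_dualMap (hx.trans hxy)]
    exact dualMap_mul_dualSlope_div_dualSource_lt hω hp hx hxy h
  pohozaevDensity_pos := forall_pos_lt_of_dualMap fun x y hx hxy h => by
    rw [pohozaevDensity_dualNonlinearity_dualMap k hp hx] at h
    rw [pohozaevDensity_dualNonlinearity_dualMap k hp (hx.trans hxy)]
    exact dualEnergy_sub_dualMap_mul_dualSource_pos (by exact_mod_cast hk) hω hp hx hxy h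

end DualNonlinearity

/-! ### Radial functions -/

section TwiceDifferentiable

variable {F : ℝ → ℝ} {r : ℝ}

lemma hasDerivAt_of_contDiffOn (hF : ContDiffOn ℝ 2 F (Ioi 0)) (hr : 0 < r) :
    HasDerivAt F (deriv F r) r :=
  ((hF.contDiffAt (Ioi_mem_nhds hr)).differentiableAt two_ne_zero).hasDerivAt

lemma hasDerivAt_deriv_of_contDiffOn (hF : ContDiffOn ℝ 2 F (Ioi 0)) (hr : 0 < r) :
    HasDerivAt (deriv F) (deriv (deriv F) r) r := by
  have hF' : ContDiffOn ℝ 1 (deriv F) (Ioi 0) :=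
    hF.deriv_of_isOpen isOpen_Ioi one_add_one_eq_two.le
  exact ((hF'.contDiffAt (Ioi_mem_nhds hr)).differentiableAt one_ne_zero).hasDerivAt

lemma lapRad_sq (N : ℕ) (hF : ContDiffOn ℝ 2 F (Ioi 0)) (hr : 0 < r) :
    lapRad N (fun s => F s ^ 2) r = 2 * deriv F r ^ 2 + 2 * F r * lapRad N F r := by
  have hsq : ∀ s, 0 < s → deriv (fun t => F t ^ 2) s = 2 * F s * deriv F s := fun s hs => by
    simpa using ((hasDerivAt_of_contDiffOn hF hs).fun_pow 2).deriv
  have hsq' : deriv (deriv fun s => F s ^ 2) r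
      = 2 * deriv F r * deriv F r + 2 * F r * deriv (deriv F) r :=
    (EventuallyEq.deriv_eq (eventually_of_mem (Ioi_mem_nhds hr) hsq)).trans
      (((hasDerivAt_of_contDiffOn hF hr).const_mul 2).mul
        (hasDerivAt_deriv_of_contDiffOn hF hr)).deriv
  rw [lapRad, hsq', hsq r hr, lapRad]
  ring

end TwiceDifferentiable

section Laplacian

variable {N : ℕ} {F : ℝ → ℝ} {x : EuclideanSpace ℝ (Fin N)}

lemma hasFDerivAt_norm {E : Type*} [NormedAddCommGroup E] [InnerProductSpace ℝ E] {x : E}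
    (hx : x ≠ 0) : HasFDerivAt (fun y : E => ‖y‖) (‖x‖⁻¹ • innerSL ℝ x) x := by
  have hsqrt := (hasStrictFDerivAt_norm_sq x).hasFDerivAt.sqrt
    (pow_ne_zero 2 (norm_ne_zero_iff.2 hx))
  simp only [sqrt_sq (norm_nonneg _)] at hsqrt
  refine hsqrt.congr_fderiv ?_
  rw [two_nsmul, ← two_smul ℝ (innerSL ℝ x), smul_smul]
  congr 1
  field_simp

lemma pd_comp_norm {F' : ℝ} (hF : HasDerivAt F F' ‖x‖) (hx : x ≠ 0) (i : Fin N) :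
    pd i (fun y : EuclideanSpace ℝ (Fin N) => F ‖y‖) x = F' / ‖x‖ * x i := by
  have hcomp : HasFDerivAt (fun y : EuclideanSpace ℝ (Fin N) => F ‖y‖) _ x :=
    hF.comp_hasFDerivAt x (hasFDerivAt_norm hx)
  rw [pd, hcomp.fderiv]
  simp only [smul_apply, innerSL_apply_apply, smul_eq_mul,
    EuclideanSpace.inner_single_right, one_mul, conj_trivial, div_eq_mul_inv, mul_assoc]

lemma pd_pd_comp_norm (hF : ContDiffOn ℝ 2 F (Ioi 0)) (hx : x ≠ 0) (i : Fin N) :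
    pd i (pd i fun y : EuclideanSpace ℝ (Fin N) => F ‖y‖) x
      = deriv F ‖x‖ / ‖x‖
        + (deriv (deriv F) ‖x‖ / ‖x‖ ^ 2 - deriv F ‖x‖ / ‖x‖ ^ 3) * x i ^ 2 := by
  have hn : 0 < ‖x‖ := norm_pos_iff.2 hx
  have hpd : pd i (fun y : EuclideanSpace ℝ (Fin N) => F ‖y‖) =ᶠ[𝓝 x]
      fun y => deriv F ‖y‖ / ‖y‖ * y i := by
    filter_upwards [isOpen_ne.mem_nhds hx] with y hy
    exact pd_comp_norm (hasDerivAt_of_contDiffOn hF (norm_pos_iff.2 hy)) hy i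
  have hquot : HasFDerivAt (fun y : EuclideanSpace ℝ (Fin N) => deriv F ‖y‖ / ‖y‖) _ x :=
    ((hasDerivAt_deriv_of_contDiffOn hF hn).div (hasDerivAt_id' _) hn.ne').comp_hasFDerivAt x
      (hasFDerivAt_norm hx)
  have hprod : HasFDerivAt (fun y : EuclideanSpace ℝ (Fin N) => deriv F ‖y‖ / ‖y‖ * y i) _ x :=
    hquot.mul (EuclideanSpace.proj (𝕜 := ℝ) i).hasFDerivAt
  rw [pd, hpd.fderiv_eq, hprod.fderiv]
  simp only [add_apply, smul_apply, PiLp.proj_apply, PiLp.single_eq_same, smul_eq_mul, mul_one,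
    coe_innerSL_apply, EuclideanSpace.inner_single_right, conj_trivial, one_mul]
  field_simp

lemma lap_comp_norm (hF : ContDiffOn ℝ 2 F (Ioi 0)) (hx : x ≠ 0) :
    lap (fun y : EuclideanSpace ℝ (Fin N) => F ‖y‖) x = lapRad N F ‖x‖ := by
  have hn : ‖x‖ ≠ 0 := norm_ne_zero_iff.2 hx
  rw [lap, Finset.sum_congr rfl fun i _ => pd_pd_comp_norm hF hx i, Finset.sum_add_distrib,
    ← Finset.mul_sum, ← EuclideanSpace.real_norm_sq_eq, Finset.sum_const, Finset.card_univ,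
    Fintype.card_fin, nsmul_eq_mul, lapRad]
  field_simp
  ring

end Laplacian

section Profile

variable {E : Type*} [NormedAddCommGroup E] [NormedSpace ℝ E] {u : E → ℝ} {U : ℝ → ℝ} {e : E}

lemma profile_eq (hU : ∀ x, u x = U ‖x‖) (he : ‖e‖ = 1) {r : ℝ} (hr : 0 ≤ r) :
    U r = u (r • e) := by
  rw [hU, norm_smul, he, mul_one, norm_of_nonneg hr]

lemma contDiffOn_profile {n : WithTop ℕ∞} (hu : ContDiff ℝ n u) (hU : ∀ x, u x = U ‖x‖)
    (he : ‖e‖ = 1) : ContDiffOn ℝ n U (Ici 0) :=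
  (hu.comp (contDiff_id.smul contDiff_const)).contDiffOn.congr fun _ hr => profile_eq hU he hr

lemma abs_deriv_profile_le (hu : Differentiable ℝ u) (hU : ∀ x, u x = U ‖x‖) (he : ‖e‖ = 1)
    {r : ℝ} (hr : 0 < r) : |deriv U r| ≤ ‖fderiv ℝ u (r • e)‖ := by
  have hray : HasDerivAt (fun t : ℝ => u (t • e)) (fderiv ℝ u (r • e) ((1 : ℝ) • e)) r :=
    (hu (r • e)).hasFDerivAt.comp_hasDerivAt r ((hasDerivAt_id' r).smul_const e)
  have hloc : U =ᶠ[𝓝 r] fun t => u (t • e) :=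
    eventually_of_mem (Ioi_mem_nhds hr) fun t ht => profile_eq hU he (le_of_lt ht)
  rw [hloc.deriv_eq, hray.deriv, one_smul]
  exact (fderiv ℝ u (r • e)).unit_le_opNorm e he.le

end Profile

/-! ### The dual equations -/

/-- The image of a variation `v` of `U` under the derivative of `U ↦ dualMap ∘ U`. -/
def dualMode (U v : ℝ → ℝ) (r : ℝ) : ℝ :=
  dualWeight (U r) * v r

/-- The derivative of `dualMode U v`, for differentiable `U` and `v`. -/
def dualModeDeriv (U v : ℝ → ℝ) (r : ℝ) : ℝ :=
  2 * U r / dualWeight (U r) * deriv U r * v r + dualWeight (U r) * deriv v r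

section DualEquations

variable {k : ℕ} {ω p r : ℝ} {U v : ℝ → ℝ}

lemma hasDerivAt_dualMode (hU : HasDerivAt U (deriv U r) r) (hv : HasDerivAt v (deriv v r) r) :
    HasDerivAt (dualMode U v) (dualModeDeriv U v r) r :=
  ((hasDerivAt_dualWeight (U r)).comp r hU).mul hv

/-- The radial form of (QLS) in dimension `N` for the profile `U`. -/
def RadialQLS (N : ℕ) (ω p : ℝ) (U : ℝ → ℝ) : Prop :=
  ∀ r, 0 < r → -lapRad N U r - U r * lapRad N (fun s => U s ^ 2) r + ω * U r - U r ^ p = 0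

lemma RadialQLS.expanded (h : RadialQLS (k + 1) ω p U) (hU : ContDiffOn ℝ 2 U (Ioi 0))
    (hpos : ∀ r, 0 < r → 0 < U r) (hr : 0 < r) :
    dualWeight (U r) ^ 2 * (deriv (deriv U) r + k / r * deriv U r) + 2 * U r * deriv U r ^ 2
      + U r * (U r ^ (p - 1) - ω) = 0 := by
  have hp : U r ^ p = U r * U r ^ (p - 1) := by
    rw [rpow_sub_one (hpos r hr).ne', mul_div_cancel₀ _ (hpos r hr).ne']
  have hqls := h r hr
  rw [lapRad_sq _ hU hr, hp, lapRad] at hqls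
  push_cast at hqls
  rw [dualWeight_sq]
  linear_combination -hqls

lemma linearized_expanded (h : LplusRad (k + 1) ω p U 0 v r = 0)
    (hU : ContDiffOn ℝ 2 U (Ioi 0)) (hr : 0 < r) :
    dualWeight (U r) ^ 2 * (deriv (deriv v) r + k / r * deriv v r)
      + 4 * U r * deriv U r * deriv v r
      + (4 * U r * (deriv (deriv U) r + k / r * deriv U r) + 2 * deriv U r ^ 2
        + (p * U r ^ (p - 1) - ω)) * v r = 0 := by
  rw [LplusRad, lapRad_sq _ hU hr, lapRad] at h
  push_cast at h
  rw [dualWeight_sq]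
  linear_combination -h

lemma RadialQLS.radialPoisson (h : RadialQLS (k + 1) ω p U) (hU : ContDiffOn ℝ 2 U (Ioi 0))
    (hpos : ∀ r, 0 < r → 0 < U r) :
    RadialPoisson k (fun r => dualNonlinearity ω p (dualMap (U r))) (fun r => dualMap (U r))
      (dualMode U (deriv U)) where
  hasDerivAt r hr := (hasDerivAt_dualMap (U r)).comp r (hasDerivAt_of_contDiffOn hU hr)
  hasDerivAt_deriv r hr := by
    refine (hasDerivAt_dualMode (hasDerivAt_of_contDiffOn hU hr)
      (hasDerivAt_deriv_of_contDiffOn hU hr)).congr_deriv ?_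
    have hq := (dualWeight_pos (U r)).ne'
    have hqls := h.expanded hU hpos hr
    rw [dualNonlinearity_dualMap, dualSource, dualModeDeriv, dualMode]
    generalize (k : ℝ) / r = κ at *
    field_simp
    linear_combination hqls

lemma RadialQLS.linearized_radialPoisson (h : RadialQLS (k + 1) ω p U)
    (hU : ContDiffOn ℝ 2 U (Ioi 0)) (hpos : ∀ r, 0 < r → 0 < U r)
    (hv : ContDiffOn ℝ 2 v (Ioi 0)) (hlin : ∀ r, 0 < r → LplusRad (k + 1) ω p U 0 v r = 0) :
    RadialPoisson k (fun r => deriv (dualNonlinearity ω p) (dualMap (U r)) * dualMode U v r)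
      (dualMode U v) (dualModeDeriv U v) where
  hasDerivAt r hr :=
    hasDerivAt_dualMode (hasDerivAt_of_contDiffOn hU hr) (hasDerivAt_of_contDiffOn hv hr)
  hasDerivAt_deriv r hr := by
    have hq := (dualWeight_pos (U r)).ne'
    have hU' := hasDerivAt_of_contDiffOn hU hr
    have hv' := hasDerivAt_of_contDiffOn hv hr
    have hqU := (hasDerivAt_dualWeight (U r)).comp r hU'
    refine (((((hU'.const_mul 2).div hqU hq).mul (hasDerivAt_deriv_of_contDiffOn hU hr)).mul
      hv').add (hqU.mul (hasDerivAt_deriv_of_contDiffOn hv hr))).congr_deriv ?_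
    have hqls := h.expanded hU hpos hr
    have hlin' := linearized_expanded (hlin r hr) hU hr
    have hsq := dualWeight_sq (U r)
    rw [deriv_dualNonlinearity_dualMap (hpos r hr), dualSlope, dualModeDeriv, dualMode]
    simp only [Function.comp_apply, Pi.mul_apply, Pi.div_apply]
    generalize (k : ℝ) / r = κ at *
    generalize dualWeight (U r) = q at *
    field_simp
    linear_combination q ^ 2 * hlin' - 2 * U r * v r * hqls - (U r ^ (p - 1) - ω) * v r * hsq

end DualEquations

/-! ### Ground states of the quasilinear equation -/

section GroundState

variable {k : ℕ} {ω p : ℝ} {u : EuclideanSpace ℝ (Fin (k + 1)) → ℝ} {U v : ℝ → ℝ}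

lemma norm_smul_single_zero {r : ℝ} (hr : 0 ≤ r) :
    ‖r • (EuclideanSpace.single 0 1 : EuclideanSpace ℝ (Fin (k + 1)))‖ = r := by
  simp [norm_smul, abs_of_nonneg hr]

lemma contDiffOn_groundState_profile (hu : IsGroundState (k + 1) ω p u)
    (hU : ∀ x, u x = U ‖x‖) : ContDiffOn ℝ 2 U (Ici 0) :=
  contDiffOn_profile (contDiff_infty.1 hu.smooth 2) hU
    (e := EuclideanSpace.single 0 1) (by simp)

lemma radialQLS_of_isGroundState (hu : IsGroundState (k + 1) ω p u) (hU : ∀ x, u x = U ‖x‖) :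
    RadialQLS (k + 1) ω p U := by
  intro r hr
  have hC2 := (contDiffOn_groundState_profile hu hU).mono Ioi_subset_Ici_self
  have hnorm := norm_smul_single_zero (k := k) hr.le
  have hne := norm_ne_zero_iff.1 (hnorm.trans_ne hr.ne')
  have hqls := hu.solves (r • EuclideanSpace.single 0 1)
  simp only [funext hU, lap_comp_norm hC2 hne, lap_comp_norm (hC2.pow 2) hne, hnorm] at hqls
  exact hqls

lemma tendsto_pow_mul_profile (hu : IsGroundState (k + 1) ω p u) (hU : ∀ x, u x = U ‖x‖)
    (j : ℕ) : Tendsto (fun r => r ^ j * U r) atTop (𝓝 0) := by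
  obtain ⟨C, -, δ, hδ, hdecay⟩ := hu.decay 0
  refine tendsto_pow_mul_of_exp_decay (C := C) hδ (fun r hr => ?_) j
  have := hdecay (r • EuclideanSpace.single 0 1)
  rwa [norm_iteratedFDeriv_zero, hU, norm_smul_single_zero hr.le] at this

lemma tendsto_pow_mul_deriv_profile (hu : IsGroundState (k + 1) ω p u) (hU : ∀ x, u x = U ‖x‖)
    (j : ℕ) : Tendsto (fun r => r ^ j * deriv U r) atTop (𝓝 0) := by
  obtain ⟨C, -, δ, hδ, hdecay⟩ := hu.decay 1
  refine tendsto_pow_mul_of_exp_decay (C := C) hδ (fun r hr => ?_) j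
  have := hdecay (r • EuclideanSpace.single 0 1)
  rw [norm_iteratedFDeriv_one, norm_smul_single_zero hr.le] at this
  exact (abs_deriv_profile_le (hu.smooth.differentiable (by simp)) hU (by simp) hr).trans this

lemma tendsto_profile_atTop (hu : IsGroundState (k + 1) ω p u) (hU : ∀ x, u x = U ‖x‖) :
    Tendsto U atTop (𝓝 0) := by
  simpa using tendsto_pow_mul_profile hu hU 0

theorem radialGroundState_dualMap (hu : IsGroundState (k + 1) ω p u) (hU : ∀ x, u x = U ‖x‖)
    (hpos : ∀ r, 0 ≤ r → 0 < U r) (hanti : StrictAntiOn U (Ici 0)) :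
    RadialGroundState k (dualNonlinearity ω p) (fun r => dualMap (U r)) (dualMode U (deriv U)) := by
  have hC2 := contDiffOn_groundState_profile hu hU
  have hUtop := tendsto_profile_atTop hu hU
  exact
    { equation := (radialQLS_of_isGroundState hu hU).radialPoisson
        (hC2.mono Ioi_subset_Ici_self) fun r hr => hpos r hr.le
      pos := fun r hr => dualMap_pos (hpos r hr.le)
      strictAntiOn := strictMono_dualMap.comp_strictAntiOn (hanti.mono Ioi_subset_Ici_self)
      exists_tendsto := ⟨_, tendsto_nhdsGT_of_continuousOn_Ici
        (continuous_dualMap.comp_continuousOn hC2.continuousOn)⟩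
      tendsto_pow_mul := fun j =>
        tendsto_pow_mul_dualMap hUtop (tendsto_pow_mul_profile hu hU j)
      tendsto_pow_mul_deriv := fun j => by
        simpa only [dualMode, mul_zero, mul_left_comm] using
          (tendsto_dualWeight_comp hUtop).mul (tendsto_pow_mul_deriv_profile hu hU j) }

lemma tendsto_dualModeDeriv {l : Filter ℝ} (hU : Tendsto U l (𝓝 0))
    (hU' : Tendsto (deriv U) l (𝓝 0)) (hv : Tendsto v l (𝓝 0)) (hv' : Tendsto (deriv v) l (𝓝 0)) :
    Tendsto (dualModeDeriv U v) l (𝓝 0) := by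
  have hq := tendsto_dualWeight_comp hU
  have hlim := ((((hU.const_mul 2).div hq (dualWeight_pos 0).ne').mul hU').mul hv).add
    (hq.mul hv')
  simp only [mul_zero, add_zero] at hlim
  exact hlim

theorem linearizedSolution_dualMode (hu : IsGroundState (k + 1) ω p u) (hU : ∀ x, u x = U ‖x‖)
    (hpos : ∀ r, 0 ≤ r → 0 < U r) (hvc : ContinuousOn v (Ici 0))
    (hv2 : ContDiffOn ℝ 2 v (Ioi 0))
    (hint : IntegrableOn (fun r => (v r ^ 2 + deriv v r ^ 2) * r ^ k) (Ioi 0))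
    (hlin : ∀ r, 0 < r → LplusRad (k + 1) ω p U 0 v r = 0) :
    LinearizedSolution k (dualNonlinearity ω p) (fun r => dualMap (U r)) (dualMode U v)
      (dualModeDeriv U v) := by
  have hC2 := contDiffOn_groundState_profile hu hU
  have hUtop := tendsto_profile_atTop hu hU
  have hU'top : Tendsto (deriv U) atTop (𝓝 0) := by
    simpa using tendsto_pow_mul_deriv_profile hu hU 0
  obtain ⟨l, hl, htop, hv, hv'⟩ := exists_tendsto_zero_of_integrableOn hint
  have hmode : Tendsto (dualMode U v) l (𝓝 0) :=
    mul_zero (dualWeight 0) ▸ (tendsto_dualWeight_comp (hUtop.mono_left htop)).mul hv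
  exact
    { equation := (radialQLS_of_isGroundState hu hU).linearized_radialPoisson
        (hC2.mono Ioi_subset_Ici_self) (fun r hr => hpos r hr.le) hv2 hlin
      exists_tendsto := ⟨_, tendsto_nhdsGT_of_continuousOn_Ici
        ((continuous_dualWeight.comp_continuousOn hC2.continuousOn).mul hvc)⟩
      exists_tendsto_zero := ⟨l, hl, htop, hmode, tendsto_dualModeDeriv (hUtop.mono_left htop)
        (hU'top.mono_left htop) hv hv'⟩ }

end GroundState

end QLS

/-- A finite-energy radial solution of the radial linearized equation `L₊,₀ v = 0` vanishes identically. -/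
theorem stmt7 (N : ℕ) (hN : 2 ≤ N) (ω p : ℝ) (hω : 0 < ω) (hp : 1 < p)
    (hpmax : 3 ≤ N → p < (3 * (N : ℝ) + 2) / ((N : ℝ) - 2))
    (u : EuclideanSpace ℝ (Fin N) → ℝ) (U : ℝ → ℝ)
    (hu : IsGroundState N ω p u)
    (hU : StrictAntiOn U (Set.Ici 0) ∧ (∀ r, 0 ≤ r → 0 < U r) ∧ ∀ x, u x = U ‖x‖)
    
    (v : ℝ → ℝ) (hvc : ContinuousOn v (Set.Ici 0)) (hv2 : ContDiffOn ℝ 2 v (Set.Ioi 0))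
    (hint : IntegrableOn (fun r => ((v r) ^ 2 + (deriv v r) ^ 2) * r ^ (N - 1)) (Set.Ioi 0))
    (heq : ∀ r ∈ Set.Ioi (0 : ℝ), LplusRad N ω p U 0 v r = 0) :
    ∀ r, 0 ≤ r → v r = 0 := by
  obtain ⟨k, rfl⟩ : ∃ k, N = k + 1 := ⟨N - 1, by omega⟩
  have hk : 1 ≤ k := by omega
  obtain ⟨hanti, hpos, hrad⟩ := hU
  have hground := QLS.radialGroundState_dualMap hu hrad hpos hanti
  have hmode := QLS.linearizedSolution_dualMode hu hrad hpos hvc hv2 hint heq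
  have hzero : Set.EqOn v 0 (Set.Ioi 0) := fun r hr =>
    (mul_eq_zero.1 (hmode.eq_zero hground
      (QLS.admissibleNonlinearity_dualNonlinearity hk hω hp) hk hr)).resolve_left
      (QLS.dualWeight_pos (U r)).ne'
  intro r hr
  refine hzero.of_subset_closure hvc continuousOn_const Set.Ioi_subset_Ici_self ?_ hr
  rw [closure_Ioi]

end
end

section
/- Let N ≥ 2 be an integer, ω > 0, and 1 < p < p_max, and let U : [0,∞) → (0,∞) be the radial profile of a ground-state profile u of (QLS) (so u(x) = U(|x|)). Suppose v : [0,∞) → ℝ is continuous, twice continuously differentiable on (0,∞), satisfies ∫₀^∞ (v(r)² + v'(r)²) r^{N−1} dr < ∞, and solves L₊,₁ v = 0 on (0,∞) (the radial linearized equation with angular eigenvalue λ₁ = N−1). Then there exists a real number c such that v(r) = c·U'(r) for all r > 0. -/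
open MeasureTheory Real Filter Topology

noncomputable section

/-!
The operator `L₊,ₖ` is of Sturm–Liouville form: `L₊,ₖ v = 0` says `(P v')' = Q v` with
`P = r ^ (N - 1) * (1 + 2 * U ^ 2)`. Differentiating the radial form of (QLS) shows that `U'` solves
`L₊,₁ U' = 0`. For two solutions `v` and `U'` of the same Sturm–Liouville equation the Wronskian
`P * (v * U'' - v' * U')` is constant on `(0, ∞)`. Both functions have finite energy with respect to
`r ^ (N - 1) dr` and `P` is comparable to that weight, so the Wronskian is integrable on a half-line
and hence zero. Therefore `v` and `U'` have proportional Cauchy data at a point where `U' ≠ 0`, and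
uniqueness for linear equations makes them proportional everywhere.
-/

section LinearODE

variable {E : Type*} [NormedAddCommGroup E] [NormedSpace ℝ E] {A : ℝ → E →L[ℝ] E} {f : ℝ → E}
  {s : Set ℝ} {t₀ : ℝ}

lemma eventuallyEq_zero_of_linear_ODE (hA : ContinuousAt A t₀)
    (hf : ∀ᶠ t in 𝓝 t₀, HasDerivAt f (A t (f t)) t) (h₀ : f t₀ = 0) : f =ᶠ[𝓝 t₀] 0 := by
  have lipschitz : ∀ᶠ t in 𝓝 t₀, LipschitzOnWith (‖A t₀‖₊ + 1) (A t) Set.univ := by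
    filter_upwards [hA.nnnorm.eventually_le_const (lt_add_one ‖A t₀‖₊)] with t ht
    exact ((A t).lipschitz.weaken ht).lipschitzOnWith
  refine ODE_solution_unique_of_eventually (v := fun t => A t) (s := fun _ => Set.univ) lipschitz
    (hf.mono fun t ht => ⟨ht, trivial⟩) (.of_forall fun t => ⟨?_, trivial⟩) h₀
  simp

lemma eqOn_zero_of_linear_ODE (hs : IsOpen s) (hs' : IsPreconnected s) (hA : ContinuousOn A s)
    (hf : ∀ t ∈ s, HasDerivAt f (A t (f t)) t) (ht₀ : t₀ ∈ s) (h₀ : f t₀ = 0) :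
    Set.EqOn f 0 s := by
  have locally_zero {t : ℝ} (ht : t ∈ s) (hft : f t = 0) : f =ᶠ[𝓝 t] 0 :=
    eventuallyEq_zero_of_linear_ODE (hA.continuousAt (hs.mem_nhds ht))
      (eventually_of_mem (hs.mem_nhds ht) hf) hft
  suffices s ⊆ {t | f =ᶠ[𝓝 t] 0} from fun t ht => (this ht).eq_of_nhds
  refine hs'.subset_of_closure_inter_subset isOpen_setOfPred_eventually_nhds
    ⟨t₀, ht₀, locally_zero ht₀ h₀⟩ ?_
  rintro t ⟨ht_closure, ht⟩
  refine locally_zero ht ?_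
  by_contra hne
  obtain ⟨x, hx_ne, hx_zero⟩ := mem_closure_iff_nhds.mp ht_closure _
    ((hf t ht).continuousAt.eventually_ne hne)
  exact hx_ne hx_zero.eq_of_nhds

end LinearODE

/-- `f` solves the Sturm–Liouville equation `(P f')' = Q f` at every point of `s`. Only the flux
`P f'` is required to be differentiable, not `P` and `f'` separately. -/
structure IsSturmLiouvilleSolution (P Q : ℝ → ℝ) (s : Set ℝ) (f : ℝ → ℝ) : Prop where
  differentiableAt : ∀ r ∈ s, DifferentiableAt ℝ f r
  hasDerivAt_flux : ∀ r ∈ s, HasDerivAt (fun t => P t * deriv f t) (Q r * f r) r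

/-- The Wronskian of `f` and `g` with the weight `P` that makes it constant when both solve
`(P f')' = Q f`. -/
def weightedWronskian (P f g : ℝ → ℝ) (r : ℝ) : ℝ :=
  P r * (f r * deriv g r - deriv f r * g r)

lemma abs_weightedWronskian_le {P f g : ℝ → ℝ} {r B : ℝ} (hP : |P r| ≤ B) :
    |weightedWronskian P f g r| ≤
      B * (f r ^ 2 + deriv f r ^ 2) + B * (g r ^ 2 + deriv g r ^ 2) := by
  have cross_le : |f r * deriv g r - deriv f r * g r| ≤
      (f r ^ 2 + deriv f r ^ 2) + (g r ^ 2 + deriv g r ^ 2) := by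
    rw [abs_le]
    constructor <;> nlinarith [sq_nonneg (f r + deriv g r), sq_nonneg (f r - deriv g r),
      sq_nonneg (deriv f r + g r), sq_nonneg (deriv f r - g r)]
  rw [weightedWronskian, abs_mul, ← mul_add]
  exact mul_le_mul hP cross_le (abs_nonneg _) ((abs_nonneg _).trans hP)

namespace IsSturmLiouvilleSolution

variable {P Q w f g : ℝ → ℝ} {s : Set ℝ} {r₀ C : ℝ}

lemma sub_const_mul (hs : IsOpen s) (hf : IsSturmLiouvilleSolution P Q s f)
    (hg : IsSturmLiouvilleSolution P Q s g) (c : ℝ) :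
    IsSturmLiouvilleSolution P Q s (fun r => f r - c * g r) where
  differentiableAt r hr := (hf.differentiableAt r hr).sub ((hg.differentiableAt r hr).const_mul c)
  hasDerivAt_flux r hr := by
    have flux_eq : (fun t => P t * deriv (fun r => f r - c * g r) t) =ᶠ[𝓝 r]
        fun t => P t * deriv f t - c * (P t * deriv g t) := by
      filter_upwards [hs.mem_nhds hr] with t ht
      rw [deriv_fun_sub (hf.differentiableAt t ht) ((hg.differentiableAt t ht).const_mul c),
        deriv_const_mul c (hg.differentiableAt t ht)]
      ring
    refine HasDerivAt.congr_of_eventuallyEq ?_ flux_eq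
    exact ((hf.hasDerivAt_flux r hr).sub ((hg.hasDerivAt_flux r hr).const_mul c)).congr_deriv
      (by ring)

lemma eqOn_zero (hs : IsOpen s) (hs' : IsPreconnected s) (hP : ContinuousOn P s)
    (hP₀ : ∀ r ∈ s, P r ≠ 0) (hQ : ContinuousOn Q s) (hf : IsSturmLiouvilleSolution P Q s f)
    (hr₀ : r₀ ∈ s) (h₀ : f r₀ = 0) (h₁ : deriv f r₀ = 0) : Set.EqOn f 0 s := by
  -- The pair `(f, P f')` solves the first-order system `y' = z / P`, `z' = Q y`.
  let A : ℝ → ℝ × ℝ →L[ℝ] ℝ × ℝ := fun r =>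
    (P r)⁻¹ • (ContinuousLinearMap.inl ℝ ℝ ℝ ∘L ContinuousLinearMap.snd ℝ ℝ ℝ) +
      Q r • (ContinuousLinearMap.inr ℝ ℝ ℝ ∘L ContinuousLinearMap.fst ℝ ℝ ℝ)
  have hA : ContinuousOn A s :=
    ((hP.inv₀ hP₀).smul continuousOn_const).add (hQ.smul continuousOn_const)
  have system (r : ℝ) (hr : r ∈ s) : HasDerivAt (fun t => (f t, P t * deriv f t))
      (A r (f r, P r * deriv f r)) r := by
    refine ((hf.differentiableAt r hr).hasDerivAt.prodMk (hf.hasDerivAt_flux r hr)).congr_deriv ?_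
    simp [A, hP₀ r hr]
  have pair_zero := eqOn_zero_of_linear_ODE hs hs' hA system hr₀ (by simp [h₀, h₁])
  exact fun r hr => congrArg Prod.fst (pair_zero hr)

lemma hasDerivAt_weightedWronskian (hf : IsSturmLiouvilleSolution P Q s f)
    (hg : IsSturmLiouvilleSolution P Q s g) {r : ℝ} (hr : r ∈ s) :
    HasDerivAt (weightedWronskian P f g) 0 r := by
  have flux_form : weightedWronskian P f g =
      fun t => f t * (P t * deriv g t) - g t * (P t * deriv f t) := by
    funext t
    rw [weightedWronskian]
    ring
  rw [flux_form]
  exact (((hf.differentiableAt r hr).hasDerivAt.mul (hg.hasDerivAt_flux r hr)).sub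
    ((hg.differentiableAt r hr).hasDerivAt.mul (hf.hasDerivAt_flux r hr))).congr_deriv (by ring)

lemma weightedWronskian_eq (hs : IsOpen s) (hs' : IsPreconnected s)
    (hf : IsSturmLiouvilleSolution P Q s f) (hg : IsSturmLiouvilleSolution P Q s g) {r : ℝ}
    (hr : r ∈ s) (hr₀ : r₀ ∈ s) : weightedWronskian P f g r = weightedWronskian P f g r₀ :=
  hs.is_const_of_deriv_eq_zero hs'
    (fun _ ht => (hf.hasDerivAt_weightedWronskian hg ht).differentiableAt.differentiableWithinAt)
    (fun _ ht => (hf.hasDerivAt_weightedWronskian hg ht).deriv) hr hr₀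

lemma eq_const_mul_of_weightedWronskian_eq_zero (hs : IsOpen s) (hs' : IsPreconnected s)
    (hP : ContinuousOn P s) (hP₀ : ∀ r ∈ s, P r ≠ 0) (hQ : ContinuousOn Q s)
    (hf : IsSturmLiouvilleSolution P Q s f) (hg : IsSturmLiouvilleSolution P Q s g)
    (hr₀ : r₀ ∈ s) (hgr₀ : g r₀ ≠ 0) (hW : weightedWronskian P f g r₀ = 0) :
    ∀ r ∈ s, f r = f r₀ / g r₀ * g r := by
  have hW' : f r₀ * deriv g r₀ - deriv f r₀ * g r₀ = 0 :=
    (mul_eq_zero.mp hW).resolve_left (hP₀ r₀ hr₀)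
  have deriv_zero : deriv (fun r => f r - f r₀ / g r₀ * g r) r₀ = 0 := by
    rw [deriv_fun_sub (hf.differentiableAt r₀ hr₀) ((hg.differentiableAt r₀ hr₀).const_mul _),
      deriv_const_mul _ (hg.differentiableAt r₀ hr₀)]
    field_simp
    linarith
  have difference_zero := (hf.sub_const_mul hs hg (f r₀ / g r₀)).eqOn_zero hs hs' hP hP₀ hQ hr₀
    (by field_simp; ring) deriv_zero
  exact fun r hr => sub_eq_zero.mp (difference_zero hr)

lemma weightedWronskian_eq_zero_of_finite_energy (hs : IsOpen s) (hs' : IsPreconnected s)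
    (hs_vol : volume s = ⊤) (hPw : ∀ r ∈ s, |P r| ≤ C * w r)
    (hf : IsSturmLiouvilleSolution P Q s f) (hg : IsSturmLiouvilleSolution P Q s g)
    (hf_energy : IntegrableOn (fun r => (f r ^ 2 + deriv f r ^ 2) * w r) s)
    (hg_energy : IntegrableOn (fun r => (g r ^ 2 + deriv g r ^ 2) * w r) s) (hr₀ : r₀ ∈ s) :
    weightedWronskian P f g r₀ = 0 := by
  have const_integrable : IntegrableOn (fun _ => weightedWronskian P f g r₀) s := by
    refine ((hf_energy.const_mul C).add (hg_energy.const_mul C)).mono' aestronglyMeasurable_const ?_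
    refine ae_restrict_of_forall_mem hs.measurableSet fun r hr => ?_
    rw [← hf.weightedWronskian_eq hs hs' hg hr hr₀, norm_eq_abs]
    refine (abs_weightedWronskian_le (hPw r hr)).trans_eq ?_
    simp only [Pi.add_apply]
    ring
  simpa [integrableOn_const_iff, hs_vol] using const_integrable

lemma exists_eq_const_mul_of_finite_energy (hs : IsOpen s) (hs' : IsPreconnected s)
    (hs_vol : volume s = ⊤) (hP : ContinuousOn P s) (hP₀ : ∀ r ∈ s, P r ≠ 0)
    (hQ : ContinuousOn Q s) (hPw : ∀ r ∈ s, |P r| ≤ C * w r)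
    (hf : IsSturmLiouvilleSolution P Q s f) (hg : IsSturmLiouvilleSolution P Q s g)
    (hf_energy : IntegrableOn (fun r => (f r ^ 2 + deriv f r ^ 2) * w r) s)
    (hg_energy : IntegrableOn (fun r => (g r ^ 2 + deriv g r ^ 2) * w r) s)
    (hg_ne : ∃ r ∈ s, g r ≠ 0) : ∃ c : ℝ, ∀ r ∈ s, f r = c * g r := by
  obtain ⟨r₀, hr₀, hgr₀⟩ := hg_ne
  exact ⟨f r₀ / g r₀, hf.eq_const_mul_of_weightedWronskian_eq_zero hs hs' hP hP₀ hQ hg hr₀ hgr₀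
    (hf.weightedWronskian_eq_zero_of_finite_energy hs hs' hs_vol hPw hg hf_energy hg_energy hr₀)⟩

end IsSturmLiouvilleSolution

section RadialLaplacian

lemma differentiableAt_deriv_of_contDiffAt {f : ℝ → ℝ} {r : ℝ} (hf : ContDiffAt ℝ 2 f r) :
    DifferentiableAt ℝ (deriv f) r :=
  (hf.derivWithin (m := 1) (by norm_num)).differentiableAt (by norm_num)

lemma continuousOn_lapRad (N : ℕ) {f : ℝ → ℝ} (hf : ContDiffOn ℝ 2 f (Set.Ioi 0)) :
    ContinuousOn (lapRad N f) (Set.Ioi 0) := by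
  have hf' : ContDiffOn ℝ 1 (deriv f) (Set.Ioi 0) := hf.deriv_of_isOpen isOpen_Ioi (by norm_num)
  refine (hf'.continuousOn_deriv_of_isOpen isOpen_Ioi le_rfl).add
    (ContinuousOn.mul ?_ hf'.continuousOn)
  exact continuousOn_const.div continuousOn_id fun r hr => ne_of_gt hr

lemma lapRad_sq (N : ℕ) {f : ℝ → ℝ} {r : ℝ} (hf : ContDiffAt ℝ 2 f r) :
    lapRad N (fun s => f s ^ 2) r = 2 * f r * lapRad N f r + 2 * deriv f r ^ 2 := by
  have hf_nhds : ∀ᶠ s in 𝓝 r, DifferentiableAt ℝ f s :=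
    (hf.eventually (by simp)).mono fun s hs => hs.differentiableAt (by norm_num)
  have deriv_sq : deriv (fun s => f s ^ 2) =ᶠ[𝓝 r] fun s => 2 * f s * deriv f s := by
    filter_upwards [hf_nhds] with s hs
    simpa using (hs.hasDerivAt.fun_pow 2).deriv
  have deriv_deriv_sq : deriv (deriv fun s => f s ^ 2) r =
      2 * deriv f r * deriv f r + 2 * f r * deriv (deriv f) r := by
    rw [deriv_sq.deriv_eq]
    exact ((hf_nhds.self_of_nhds.hasDerivAt.const_mul 2).mul
      (differentiableAt_deriv_of_contDiffAt hf).hasDerivAt).deriv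
  rw [lapRad, lapRad, deriv_deriv_sq, deriv_sq.eq_of_nhds]
  ring

lemma hasDerivAt_lapRad (N : ℕ) {f : ℝ → ℝ} {r : ℝ} (hr : r ≠ 0)
    (hf' : DifferentiableAt ℝ (deriv f) r) (hf'' : DifferentiableAt ℝ (deriv (deriv f)) r) :
    HasDerivAt (lapRad N f)
      (lapRad N (deriv f) r - ((N : ℝ) - 1) / r ^ 2 * deriv f r) r := by
  have coeff : HasDerivAt (fun s : ℝ => ((N : ℝ) - 1) / s) (-((N : ℝ) - 1) / r ^ 2) r := by
    simpa using (hasDerivAt_const r ((N : ℝ) - 1)).fun_div (hasDerivAt_id r) hr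
  refine (hf''.hasDerivAt.add (coeff.mul hf'.hasDerivAt)).congr_deriv ?_
  rw [lapRad]
  ring

end RadialLaplacian

section CompNorm

lemma hasFDerivAt_norm_of_ne_zero {E : Type*} [NormedAddCommGroup E] [InnerProductSpace ℝ E] {x : E}
    (hx : x ≠ 0) : HasFDerivAt (fun y : E => ‖y‖) (‖x‖⁻¹ • innerSL ℝ x) x := by
  have sqrt_deriv := (hasStrictFDerivAt_norm_sq x).hasFDerivAt.sqrt (by positivity)
  simp only [sqrt_sq (norm_nonneg _)] at sqrt_deriv
  refine sqrt_deriv.congr_fderiv ?_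
  ext y
  simp only [one_div, mul_inv_rev, smul_apply, coe_innerSL_apply, nsmul_eq_mul, Nat.cast_ofNat,
    smul_eq_mul]
  field_simp

variable {N : ℕ} {g : ℝ → ℝ} {x : EuclideanSpace ℝ (Fin N)}

lemma pd_comp_norm (i : Fin N) (hx : x ≠ 0) (hg : DifferentiableAt ℝ g ‖x‖) :
    pd i (fun y => g ‖y‖) x = deriv g ‖x‖ * (‖x‖⁻¹ * x i) := by
  have chain : HasFDerivAt (fun y => g ‖y‖) _ x :=
    hg.hasDerivAt.comp_hasFDerivAt x (hasFDerivAt_norm_of_ne_zero hx)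
  rw [pd, chain.fderiv]
  simp [EuclideanSpace.inner_single_right]

lemma pd_pd_comp_norm (i : Fin N) (hx : x ≠ 0) (hg : ContDiffAt ℝ 2 g ‖x‖) :
    pd i (pd i fun y => g ‖y‖) x = deriv (deriv g) ‖x‖ * (‖x‖⁻¹ ^ 2 * x i ^ 2) +
      deriv g ‖x‖ * (‖x‖⁻¹ - ‖x‖⁻¹ ^ 3 * x i ^ 2) := by
  have hx_norm : ‖x‖ ≠ 0 := norm_ne_zero_iff.mpr hx
  have hg_nhds : ∀ᶠ y in 𝓝 x, DifferentiableAt ℝ g ‖y‖ :=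
    continuous_norm.continuousAt.eventually
      ((hg.eventually (by simp)).mono fun s hs => hs.differentiableAt (by norm_num))
  have pd_eq : (pd i fun y => g ‖y‖) =ᶠ[𝓝 x] fun y => deriv g ‖y‖ * (‖y‖⁻¹ * y i) := by
    filter_upwards [isOpen_ne.mem_nhds hx, hg_nhds] with y hy hgy
    exact pd_comp_norm i hy hgy
  have norm_deriv := hasFDerivAt_norm_of_ne_zero hx
  have product_deriv : HasFDerivAt (fun y => deriv g ‖y‖ * (‖y‖⁻¹ * y i)) _ x :=
    ((differentiableAt_deriv_of_contDiffAt hg).hasDerivAt.comp_hasFDerivAt x norm_deriv).mul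
      (((hasDerivAt_inv hx_norm).comp_hasFDerivAt x norm_deriv).mul
        (EuclideanSpace.proj i : EuclideanSpace ℝ (Fin N) →L[ℝ] ℝ).hasFDerivAt)
  rw [pd, (product_deriv.congr_of_eventuallyEq pd_eq).fderiv]
  simp only [Function.comp_apply, neg_smul, smul_neg, smul_add, add_apply, smul_apply, neg_apply,
    PiLp.proj_apply, PiLp.single_eq_same, smul_eq_mul, mul_one, coe_innerSL_apply,
    EuclideanSpace.inner_single_right, conj_trivial, one_mul, inv_pow]
  field_simp
  ring

lemma lap_comp_norm (hx : x ≠ 0) (hg : ContDiffAt ℝ 2 g ‖x‖) :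
    lap (fun y => g ‖y‖) x = lapRad N g ‖x‖ := by
  have hx_norm : ‖x‖ ≠ 0 := norm_ne_zero_iff.mpr hx
  simp only [lap, lapRad, pd_pd_comp_norm _ hx hg, Finset.sum_add_distrib, ← Finset.mul_sum,
    Finset.sum_sub_distrib, ← EuclideanSpace.real_norm_sq_eq, Finset.sum_const, Finset.card_univ,
    Fintype.card_fin, nsmul_eq_mul]
  field_simp

end CompNorm

section RadialProfile

variable {E F : Type*} [NormedAddCommGroup E] [NormedSpace ℝ E] {u : E → F} {U : ℝ → F} {e : E}

lemma eqOn_profile_line (hU : ∀ x, u x = U ‖x‖) (he : ‖e‖ = 1) :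
    Set.EqOn U (fun t => u (t • e)) (Set.Ici 0) := by
  intro r hr
  simp [hU, norm_smul, he, abs_of_nonneg (Set.mem_Ici.mp hr)]

variable [NormedAddCommGroup F] [NormedSpace ℝ F]

lemma contDiffOn_profile [Nontrivial E] {n : WithTop ℕ∞} (hu : ContDiff ℝ n u)
    (hU : ∀ x, u x = U ‖x‖) : ContDiffOn ℝ n U (Set.Ioi 0) := by
  obtain ⟨e, he⟩ := exists_norm_eq E zero_le_one
  exact (hu.comp (contDiff_id.smul contDiff_const)).contDiffOn.congr
    ((eqOn_profile_line hU he).mono Set.Ioi_subset_Ici_self)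

lemma norm_iteratedDeriv_comp_smul_le {k : ℕ} (hu : ContDiff ℝ k u) (he : ‖e‖ = 1) (r : ℝ) :
    ‖iteratedDeriv k (fun t : ℝ => u (t • e)) r‖ ≤ ‖iteratedFDeriv ℝ k u (r • e)‖ := by
  let line : ℝ →L[ℝ] E := ContinuousLinearMap.toSpanSingleton ℝ e
  have line_norm : ‖line‖ = 1 := by simp [line, he]
  have chain : iteratedFDeriv ℝ k (fun t : ℝ => u (t • e)) r =
      (iteratedFDeriv ℝ k u (r • e)).compContinuousLinearMap fun _ => line :=
    line.iteratedFDeriv_comp_right hu r (i := k) le_rfl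
  rw [← norm_iteratedFDeriv_eq_norm_iteratedDeriv, chain]
  simpa [line_norm] using
    (iteratedFDeriv ℝ k u (r • e)).norm_compContinuousLinearMap_le fun _ => line

lemma norm_iteratedDeriv_profile_le {k : ℕ} (hu : ContDiff ℝ k u) (hU : ∀ x, u x = U ‖x‖)
    (he : ‖e‖ = 1) {r : ℝ} (hr : 0 < r) :
    ‖iteratedDeriv k U r‖ ≤ ‖iteratedFDeriv ℝ k u (r • e)‖ := by
  have profile_eq : U =ᶠ[𝓝 r] fun t => u (t • e) :=
    (eqOn_profile_line hU he).eventuallyEq_of_mem (Ici_mem_nhds hr)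
  rw [profile_eq.iteratedDeriv_eq k]
  exact norm_iteratedDeriv_comp_smul_le hu he r

end RadialProfile

lemma integrableOn_sq_mul_pow_of_exp_decay {f : ℝ → ℝ} {C δ : ℝ} (n : ℕ) (hδ : 0 < δ)
    (hf : ContinuousOn f (Set.Ioi 0)) (hdecay : ∀ r, 0 < r → |f r| ≤ C * exp (-δ * r)) :
    IntegrableOn (fun r => f r ^ 2 * r ^ n) (Set.Ioi 0) := by
  have majorant : IntegrableOn (fun r : ℝ => C ^ 2 * (r ^ n * exp (-(2 * δ) * r))) (Set.Ioi 0) := by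
    have gamma_integrand := integrableOn_rpow_mul_exp_neg_mul_rpow (s := n) (p := 1) (b := 2 * δ)
      (by linarith [n.cast_nonneg (α := ℝ)]) one_pos (by positivity)
    simp only [rpow_natCast, rpow_one] at gamma_integrand
    exact gamma_integrand.const_mul (C ^ 2)
  refine majorant.mono' ?_ ?_
  · exact ((hf.pow 2).mul (continuousOn_pow n)).aestronglyMeasurable measurableSet_Ioi
  refine ae_restrict_of_forall_mem measurableSet_Ioi fun r (hr : 0 < r) => ?_
  rw [norm_of_nonneg (by positivity)]
  calc f r ^ 2 * r ^ n ≤ (C * exp (-δ * r)) ^ 2 * r ^ n := by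
        gcongr ?_ * _
        exact sq_le_sq' (abs_le.mp (hdecay r hr)).1 (abs_le.mp (hdecay r hr)).2
    _ = C ^ 2 * (r ^ n * exp (-(2 * δ) * r)) := by
        rw [mul_pow, ← exp_nat_mul]
        ring_nf

section LinearizedOperator

variable {N k : ℕ} {ω p M : ℝ} {U v : ℝ → ℝ}

/-- The leading coefficient `P` in the Sturm–Liouville form `(P v')' = Q v` of `L₊,ₖ v = 0`; it does
not depend on `k`. -/
def lplusWeight (N : ℕ) (U : ℝ → ℝ) (r : ℝ) : ℝ :=
  r ^ (N - 1) * (1 + 2 * U r ^ 2)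

/-- The zeroth-order coefficient `Q` in the Sturm–Liouville form `(P v')' = Q v` of `L₊,ₖ v = 0`. -/
def lplusPotential (N : ℕ) (ω p : ℝ) (U : ℝ → ℝ) (k : ℕ) (r : ℝ) : ℝ :=
  r ^ (N - 1) * ((1 + 2 * U r ^ 2) * (k * ((N : ℝ) + k - 2) / r ^ 2) + ω
    - (2 * U r * lapRad N U r + lapRad N (fun s => U s ^ 2) r + p * U r ^ (p - 1)))

/-- The radial form of (QLS) on `(0, ∞)`. The origin is excluded, since `lapRad` divides by `r`. -/
def IsRadialQLSSolution (N : ℕ) (ω p : ℝ) (U : ℝ → ℝ) : Prop :=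
  ∀ r, 0 < r → -lapRad N U r - U r * lapRad N (fun s => U s ^ 2) r + ω * U r - U r ^ p = 0

lemma continuousOn_lplusWeight (hU : ContinuousOn U (Set.Ioi 0)) :
    ContinuousOn (lplusWeight N U) (Set.Ioi 0) := by
  unfold lplusWeight
  fun_prop

lemma continuousOn_lplusPotential (hU : ContDiffOn ℝ 2 U (Set.Ioi 0))
    (hpos : ∀ r, 0 < r → 0 < U r) :
    ContinuousOn (lplusPotential N ω p U k) (Set.Ioi 0) := by
  have hU₀ := hU.continuousOn
  have hlap := continuousOn_lapRad N hU
  have hlap_sq := continuousOn_lapRad N (hU.pow 2)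
  have hrpow : ContinuousOn (fun r => U r ^ (p - 1)) (Set.Ioi 0) :=
    hU₀.rpow_const fun r hr => Or.inl (hpos r hr).ne'
  have hangular : ContinuousOn (fun r : ℝ => k * ((N : ℝ) + k - 2) / r ^ 2) (Set.Ioi 0) :=
    continuousOn_const.div (continuousOn_pow 2) fun r hr => pow_ne_zero 2 (ne_of_gt hr)
  unfold lplusPotential
  fun_prop

lemma lplusWeight_pos {r : ℝ} (hr : 0 < r) : 0 < lplusWeight N U r := by
  unfold lplusWeight
  positivity

lemma abs_lplusWeight_le {r : ℝ} (hr : 0 < r) (hM : |U r| ≤ M) :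
    |lplusWeight N U r| ≤ (1 + 2 * M ^ 2) * r ^ (N - 1) := by
  rw [abs_of_pos (lplusWeight_pos hr), lplusWeight, mul_comm]
  have hsq : U r ^ 2 ≤ M ^ 2 := sq_le_sq' (abs_le.mp hM).1 (abs_le.mp hM).2
  gcongr ?_ * _
  linarith

lemma hasDerivAt_lplusWeight (hN : N ≠ 0) {r : ℝ} (hr : r ≠ 0) (hU : DifferentiableAt ℝ U r) :
    HasDerivAt (lplusWeight N U)
      (r ^ (N - 1) * (((N : ℝ) - 1) / r * (1 + 2 * U r ^ 2) + 4 * U r * deriv U r)) r := by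
  obtain ⟨n, rfl⟩ := Nat.exists_eq_succ_of_ne_zero hN
  have hpow : HasDerivAt (fun s : ℝ => s ^ n) (n / r * r ^ n) r := by
    refine (hasDerivAt_pow n r).congr_deriv ?_
    rcases n with _ | m
    · simp
    · field_simp
      simp [pow_succ]
  refine (hpow.mul (((hU.hasDerivAt.pow 2).const_mul 2).const_add 1)).congr_deriv ?_
  push_cast
  simp only [Pi.pow_apply, pow_one, add_sub_cancel_right]
  ring

lemma isSturmLiouvilleSolution_of_lplusRad_eq_zero (hN : N ≠ 0)
    (hU : DifferentiableOn ℝ U (Set.Ioi 0)) (hv : ContDiffOn ℝ 2 v (Set.Ioi 0))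
    (hLv : ∀ r ∈ Set.Ioi (0 : ℝ), LplusRad N ω p U k v r = 0) :
    IsSturmLiouvilleSolution (lplusWeight N U) (lplusPotential N ω p U k) (Set.Ioi 0) v where
  differentiableAt r hr := (hv.contDiffAt (Ioi_mem_nhds hr)).differentiableAt (by norm_num)
  hasDerivAt_flux r hr := by
    have hr_ne : r ≠ 0 := ne_of_gt hr
    have hv' := differentiableAt_deriv_of_contDiffAt (hv.contDiffAt (Ioi_mem_nhds hr))
    have hP := hasDerivAt_lplusWeight hN hr_ne (hU.differentiableAt (Ioi_mem_nhds hr))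
    refine (hP.mul hv'.hasDerivAt).congr_deriv ?_
    have hLvr := hLv r hr
    rw [LplusRad] at hLvr
    rw [lplusWeight, lplusPotential]
    linear_combination -r ^ (N - 1) * hLvr

lemma lplusRad_deriv_eq_zero (hU : ContDiffOn ℝ 3 U (Set.Ioi 0)) (hpos : ∀ r, 0 < r → 0 < U r)
    (hsol : IsRadialQLSSolution N ω p U) {r : ℝ} (hr : 0 < r) :
    LplusRad N ω p U 1 (deriv U) r = 0 := by
  have hU_at {s : ℝ} (hs : 0 < s) : ContDiffAt ℝ 2 U s :=
    (hU.contDiffAt (Ioi_mem_nhds hs)).of_le (by norm_num)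
  have hU₁ := ((hU_at hr).differentiableAt (by norm_num)).hasDerivAt
  have hU₂ := differentiableAt_deriv_of_contDiffAt (hU_at hr)
  have hU₃ : DifferentiableAt ℝ (deriv (deriv U)) r := differentiableAt_deriv_of_contDiffAt
    ((hU.deriv_of_isOpen isOpen_Ioi (by norm_num)).contDiffAt (Ioi_mem_nhds hr))
  have hlap := hasDerivAt_lapRad N hr.ne' hU₂ hU₃
  have equation_near : (fun s => -lapRad N U s
      - U s * (2 * U s * lapRad N U s + 2 * deriv U s ^ 2) + ω * U s - U s ^ p) =ᶠ[𝓝 r]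
      fun _ => 0 := by
    filter_upwards [Ioi_mem_nhds hr] with s hs
    rw [← lapRad_sq N (hU_at hs)]
    exact hsol s hs
  have lap_sq_deriv := ((hU₁.const_mul 2).fun_mul hlap).fun_add
    ((hU₂.hasDerivAt.fun_pow 2).const_mul 2)
  have equation_deriv :=
    ((hlap.fun_neg.fun_sub (hU₁.fun_mul lap_sq_deriv)).fun_add (hU₁.const_mul ω)).fun_sub
      (hU₁.rpow_const (p := p) (Or.inl (hpos r hr).ne'))
  have differentiated := equation_deriv.unique
    ((hasDerivAt_const r (0 : ℝ)).congr_of_eventuallyEq equation_near)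
  rw [LplusRad, lapRad_sq N (hU_at hr)]
  simp only [lapRad] at differentiated ⊢
  push_cast at differentiated ⊢
  linear_combination differentiated

theorem exists_eq_const_mul_deriv_of_lplusRad_eq_zero (hN : N ≠ 0)
    (hU : ContDiffOn ℝ 3 U (Set.Ioi 0)) (hpos : ∀ r, 0 < r → 0 < U r)
    (hbdd : ∀ r, 0 < r → |U r| ≤ M) (hsol : IsRadialQLSSolution N ω p U)
    (hU_energy : IntegrableOn (fun r => (deriv U r ^ 2 + deriv (deriv U) r ^ 2) * r ^ (N - 1))
      (Set.Ioi 0))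
    (hU_ne : ∃ r ∈ Set.Ioi (0 : ℝ), deriv U r ≠ 0) (hv : ContDiffOn ℝ 2 v (Set.Ioi 0))
    (hv_energy : IntegrableOn (fun r => (v r ^ 2 + deriv v r ^ 2) * r ^ (N - 1)) (Set.Ioi 0))
    (hLv : ∀ r ∈ Set.Ioi (0 : ℝ), LplusRad N ω p U 1 v r = 0) :
    ∃ c : ℝ, ∀ r ∈ Set.Ioi (0 : ℝ), v r = c * deriv U r := by
  have hU_diff : DifferentiableOn ℝ U (Set.Ioi 0) := hU.differentiableOn (by norm_num)
  have hv_SL := isSturmLiouvilleSolution_of_lplusRad_eq_zero hN hU_diff hv hLv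
  have hU_SL := isSturmLiouvilleSolution_of_lplusRad_eq_zero hN hU_diff
    (hU.deriv_of_isOpen isOpen_Ioi (by norm_num)) fun r hr => lplusRad_deriv_eq_zero hU hpos hsol hr
  exact hv_SL.exists_eq_const_mul_of_finite_energy isOpen_Ioi isPreconnected_Ioi volume_Ioi
    (continuousOn_lplusWeight hU.continuousOn) (fun r hr => (lplusWeight_pos hr).ne')
    (continuousOn_lplusPotential (hU.of_le (by norm_num)) hpos)
    (fun r hr => abs_lplusWeight_le hr (hbdd r hr)) hU_SL hv_energy hU_energy hU_ne

end LinearizedOperator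

namespace IsGroundState

variable {N : ℕ} {ω p : ℝ} {u : EuclideanSpace ℝ (Fin N) → ℝ} {U : ℝ → ℝ}

lemma isRadialQLSSolution_profile [NeZero N] (hu : IsGroundState N ω p u)
    (hU : ∀ x, u x = U ‖x‖) : IsRadialQLSSolution N ω p U := by
  intro r hr
  obtain ⟨x, rfl⟩ : ∃ x : EuclideanSpace ℝ (Fin N), ‖x‖ = r := exists_norm_eq _ hr.le
  have hx : x ≠ 0 := norm_pos_iff.mp hr
  have hU_at : ContDiffAt ℝ 2 U ‖x‖ :=
    (contDiffOn_profile (contDiff_infty.mp hu.smooth 2) hU).contDiffAt (Ioi_mem_nhds hr)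
  have hsolves := hu.solves x
  obtain rfl : u = fun y => U ‖y‖ := funext hU
  rwa [lap_comp_norm hx hU_at, lap_comp_norm hx (hU_at.pow 2)] at hsolves

lemma strictAntiOn_profile [NeZero N] (hu : IsGroundState N ω p u) (hU : ∀ x, u x = U ‖x‖) :
    StrictAntiOn U (Set.Ici 0) := by
  obtain ⟨V, hV_anti, -, hV⟩ := hu.radial
  refine hV_anti.congr fun r hr => ?_
  obtain ⟨x, rfl⟩ := exists_norm_eq (EuclideanSpace ℝ (Fin N)) (Set.mem_Ici.mp hr)
  rw [← hU, hV]

lemma pos_profile [NeZero N] (hu : IsGroundState N ω p u) (hU : ∀ x, u x = U ‖x‖) {r : ℝ}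
    (hr : 0 ≤ r) : 0 < U r := by
  obtain ⟨x, rfl⟩ := exists_norm_eq (EuclideanSpace ℝ (Fin N)) hr
  exact hU x ▸ hu.pos x

lemma abs_profile_le [NeZero N] (hu : IsGroundState N ω p u) (hU : ∀ x, u x = U ‖x‖) {r : ℝ}
    (hr : 0 ≤ r) : |U r| ≤ U 0 := by
  rw [abs_of_pos (hu.pos_profile hU hr)]
  exact (hu.strictAntiOn_profile hU).antitoneOn Set.self_mem_Ici hr hr

lemma exists_deriv_profile_ne_zero [NeZero N] (hu : IsGroundState N ω p u)
    (hU : ∀ x, u x = U ‖x‖) : ∃ r ∈ Set.Ioi (0 : ℝ), deriv U r ≠ 0 := by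
  by_contra! deriv_zero
  have constant : U 1 = U 2 := isOpen_Ioi.is_const_of_deriv_eq_zero isPreconnected_Ioi
    ((contDiffOn_profile hu.smooth hU).differentiableOn (by simp)) deriv_zero
    (Set.mem_Ioi.mpr one_pos) (Set.mem_Ioi.mpr two_pos)
  exact constant.not_gt (hu.strictAntiOn_profile hU (by simp) (by simp) one_lt_two)

lemma integrableOn_iteratedDeriv_profile_sq [NeZero N] (hu : IsGroundState N ω p u)
    (hU : ∀ x, u x = U ‖x‖) (k n : ℕ) :
    IntegrableOn (fun r => iteratedDeriv k U r ^ 2 * r ^ n) (Set.Ioi 0) := by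
  obtain ⟨C, -, δ, hδ, hdecay⟩ := hu.decay k
  obtain ⟨e, he⟩ := exists_norm_eq (EuclideanSpace ℝ (Fin N)) zero_le_one
  have hu_k : ContDiff ℝ k u := contDiff_infty.mp hu.smooth k
  have hU_k : ContinuousOn (iteratedDeriv k U) (Set.Ioi 0) :=
    ((contDiffOn_profile hu_k hU).continuousOn_iteratedDerivWithin le_rfl
      isOpen_Ioi.uniqueDiffOn).congr fun r hr => (iteratedDerivWithin_of_isOpen isOpen_Ioi hr).symm
  refine integrableOn_sq_mul_pow_of_exp_decay (C := C) n hδ hU_k fun r hr => ?_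
  simpa [norm_smul, he, abs_of_pos hr] using
    (norm_iteratedDeriv_profile_le hu_k hU he hr).trans (hdecay (r • e))

lemma integrableOn_energy_deriv_profile [NeZero N] (hu : IsGroundState N ω p u)
    (hU : ∀ x, u x = U ‖x‖) (n : ℕ) :
    IntegrableOn (fun r => (deriv U r ^ 2 + deriv (deriv U) r ^ 2) * r ^ n) (Set.Ioi 0) := by
  simpa [iteratedDeriv_succ, add_mul, Pi.add_def] using
    (hu.integrableOn_iteratedDeriv_profile_sq hU 1 n).add
      (hu.integrableOn_iteratedDeriv_profile_sq hU 2 n)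

end IsGroundState

theorem stmt8_general (N : ℕ) (hN : N ≠ 0) (ω p : ℝ) (u : EuclideanSpace ℝ (Fin N) → ℝ)
    (U : ℝ → ℝ) (hu : IsGroundState N ω p u) (hU : ∀ x, u x = U ‖x‖)
    (v : ℝ → ℝ) (hv : ContDiffOn ℝ 2 v (Set.Ioi 0))
    (hv_energy : IntegrableOn (fun r => (v r ^ 2 + deriv v r ^ 2) * r ^ (N - 1)) (Set.Ioi 0))
    (hLv : ∀ r ∈ Set.Ioi (0 : ℝ), LplusRad N ω p U 1 v r = 0) :
    ∃ c : ℝ, ∀ r, 0 < r → v r = c * deriv U r := by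
  have : NeZero N := ⟨hN⟩
  exact exists_eq_const_mul_deriv_of_lplusRad_eq_zero hN
    (contDiffOn_profile (contDiff_infty.mp hu.smooth 3) hU)
    (fun r hr => hu.pos_profile hU hr.le) (fun r hr => hu.abs_profile_le hU hr.le)
    (hu.isRadialQLSSolution_profile hU) (hu.integrableOn_energy_deriv_profile hU (N - 1))
    (hu.exists_deriv_profile_ne_zero hU) hv hv_energy hLv

/-- A finite-energy solution of the radial linearized equation `L₊,₁ v = 0` is a multiple of `U'`. -/
theorem stmt8 (N : ℕ) (hN : 2 ≤ N) (ω p : ℝ) (hω : 0 < ω) (hp : 1 < p)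
    (hpmax : 3 ≤ N → p < (3 * (N : ℝ) + 2) / ((N : ℝ) - 2))
    (u : EuclideanSpace ℝ (Fin N) → ℝ) (U : ℝ → ℝ)
    (hu : IsGroundState N ω p u)
    (hU : StrictAntiOn U (Set.Ici 0) ∧ (∀ r, 0 ≤ r → 0 < U r) ∧ ∀ x, u x = U ‖x‖)
    
    (v : ℝ → ℝ) (hvc : ContinuousOn v (Set.Ici 0)) (hv2 : ContDiffOn ℝ 2 v (Set.Ioi 0))
    (hint : IntegrableOn (fun r => ((v r) ^ 2 + (deriv v r) ^ 2) * r ^ (N - 1)) (Set.Ioi 0))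
    (heq : ∀ r ∈ Set.Ioi (0 : ℝ), LplusRad N ω p U 1 v r = 0) :
    ∃ c : ℝ, ∀ r, 0 < r → v r = c * deriv U r := by
  exact stmt8_general N (by omega) ω p u U hu hU.2.2 v hv2 hint heq

end
end
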